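/- arXiv:0712.2559 — 3 statements merged into one kernel-verified Lean document; each statement's English description precedes it below -/
import Mathlib

section
/- Let (A(n))_{n∈ℤ} be a sequence of i.i.d. random d×d matrices with entries in ℝ_max, almost surely having at least one finite entry on each row, such that A(0)⊗0 is integrable (i.e. each coordinate max_j A_{ij}(0) is integrable). Then the almost-sure limit of (1/n)·y(n,0) (which exists) is deterministic if and only if for every strongly connected component c of 𝒢(A), the submatrix A^{{c}} of A(0) indexed by H_c almost surely has at least one finite entry on each row. -/
open Filter MeasureTheory ProbabilityTheory Topology

noncomputable section

/-- Max-plus action of a `d × d` matrix over `ℝ_max = ℝ ∪ {-∞}` (encoded as `EReal`,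
with `⊤` never used) on a vector: `(A ⊗ v) i = max_j (A i j + v j)`. -/
def mpVec {d : ℕ} (A : Fin d → Fin d → EReal) (v : Fin d → EReal) : Fin d → EReal :=
  fun i => ⨆ j, A i j + v j

/-- `appProd n f v = f 0 ⊗ f 1 ⊗ ⋯ ⊗ f (n-1) ⊗ v` in the max-plus algebra. -/
def appProd {d : ℕ} : ℕ → (ℕ → Fin d → Fin d → EReal) → (Fin d → EReal) → Fin d → EReal
  | 0, _, v => v
  | n + 1, f, v => mpVec (f 0) (appProd n (fun k => f (k + 1)) v)

/-- `xvec f n = f (n-1) ⊗ ⋯ ⊗ f 0 ⊗ 0`; with `f m = A(m)` this is `x(n, 0)`. -/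
def xvec {d : ℕ} (f : ℕ → Fin d → Fin d → EReal) : ℕ → Fin d → EReal
  | 0 => fun _ => 0
  | n + 1 => mpVec (f n) (xvec f n)

/-- `lvec n f = f 0 ⊗ f 1 ⊗ ⋯ ⊗ f (n-1) ⊗ 0`; with `f k = A(-(k+1))` this is `y(n, 0)`. -/
def lvec {d : ℕ} (n : ℕ) (f : ℕ → Fin d → Fin d → EReal) : Fin d → EReal :=
  appProd n f (fun _ => 0)

/-- Multiplication of an extended real by `1/n`. -/
def mpScale (n : ℕ) (x : EReal) : EReal := (((n : ℝ)⁻¹ : ℝ) : EReal) * x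

open Classical in
/-- Restriction of a matrix to the indices in `c`: entries outside `c × c` are `-∞`. -/
def mpRestrict {d : ℕ} (c : Set (Fin d)) (M : Fin d → Fin d → EReal) : Fin d → Fin d → EReal :=
  fun i j => if i ∈ c ∧ j ∈ c then M i j else ⊥

/-- Arc relation of the graph `𝒢(A)` of a random matrix `A`:
`(i,j)` is an arc iff `A ω i j ≠ -∞` with positive probability. -/
def arcRel {Ω : Type*} [MeasurableSpace Ω] (μ : Measure Ω) {d : ℕ}
    (A : Ω → Fin d → Fin d → EReal) (i j : Fin d) : Prop :=
  μ {ω | A ω i j ≠ ⊥} ≠ 0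

/-- `c` is a strongly connected component of the graph with arc relation `r`
(the mutual-reachability class of some node; nodes on no circuit are alone in their class). -/
def IsSCC {d : ℕ} (r : Fin d → Fin d → Prop) (c : Set (Fin d)) : Prop :=
  ∃ i, c = {j | Relation.ReflTransGen r i j ∧ Relation.ReflTransGen r j i}

/-- `i → c` : the node `i` reaches the component `c`. -/
def nodeReach {d : ℕ} (r : Fin d → Fin d → Prop) (i : Fin d) (c : Set (Fin d)) : Prop :=
  ∃ j ∈ c, Relation.ReflTransGen r i j

/-- `c → c'` : the component `c` reaches the component `c'`. -/
def sccReach {d : ℕ} (r : Fin d → Fin d → Prop) (c c' : Set (Fin d)) : Prop :=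
  ∃ i ∈ c, nodeReach r i c'

/-- `γ^{[c]} = max { γ^{(c')} : c → c' }`, where `γ` assigns to each s.c.c. its
maximal Lyapunov exponent. -/
def gammaBrack {d : ℕ} (r : Fin d → Fin d → Prop) (γ : Set (Fin d) → EReal)
    (c : Set (Fin d)) : EReal :=
  ⨆ c', ⨆ (_ : IsSCC r c' ∧ sccReach r c c'), γ c'

/-- The set of nodes `H_c = {c}` : nodes `i` with `c → i → c̃` for some s.c.c. `c̃`
realizing `γ^{(c̃)} = γ^{[c]}`. -/
def Hset {d : ℕ} (r : Fin d → Fin d → Prop) (γ : Set (Fin d) → EReal)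
    (c : Set (Fin d)) : Set (Fin d) :=
  {i | ∃ ct, IsSCC r ct ∧ (∃ j ∈ c, Relation.ReflTransGen r j i) ∧ nodeReach r i ct ∧
    γ ct = gammaBrack r γ c}

/-- `max { γ^{(c)} : c s.c.c. with i → c }`. -/
def limFormula {d : ℕ} (r : Fin d → Fin d → Prop) (γ : Set (Fin d) → EReal) (i : Fin d) : EReal :=
  ⨆ c, ⨆ (_ : IsSCC r c ∧ nodeReach r i c), γ c

/-!
Since the matrices are i.i.d., `f = (A(-1), A(-2), …)` is an i.i.d. sequence, and the products
`y(n, 0)` grow by appending factors on the right: prepending a matrix `M` with `M i j ≠ -∞` turns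
growth of `f` at node `j` into growth at node `i`.

Lower bound: for `a < γ^{(c)}`, growth at speed `a` from some node of `c` has positive probability.
Otherwise almost every long product inside `c` could be cut greedily into pieces of slope at most
`a`; a product has the same law as the reversed product, whose slope tends to `γ^{(c)}`. Positive
probability propagates backwards along arcs. When the rows of `H_c` have finite entries inside
`H_c`, one can always step to a node of `H_c` where growth still has positive probability, and a
zero-one law makes that probability one.

Upper bound: a path changes component at most `d` times. Over blocks of `N` matrices, the strong
law of large numbers bounds the growth at node `i` by the largest `γ^{(c)}` with `i → c`.

Conversely, a deterministic limit at `i` is at least this maximum, because every smaller speed has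
positive probability. By the upper bound after one step, row `i` of almost every matrix then has a
finite entry at some `j` with the same maximum, that is, at some `j` in `H_c`.
-/

section SequenceOperations

variable {E : Type*}

/-- The sequence `f` with its first `n` terms dropped. -/
def shiftSeq (n : ℕ) (f : ℕ → E) : ℕ → E := fun k => f (k + n)

/-- The sequence `f` with `M` put in front. -/
def consSeq (M : E) (f : ℕ → E) : ℕ → E
  | 0 => M
  | k + 1 => f k

lemma shiftSeq_zero (f : ℕ → E) : shiftSeq 0 f = f := rfl

lemma shiftSeq_shiftSeq (m n : ℕ) (f : ℕ → E) :
    shiftSeq m (shiftSeq n f) = shiftSeq (n + m) f := by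
  funext k
  simp only [shiftSeq, add_assoc, add_comm m n]

lemma consSeq_shiftSeq_one (f : ℕ → E) : consSeq (f 0) (shiftSeq 1 f) = f := by
  funext k
  cases k <;> rfl

end SequenceOperations

section MaxPlusProducts

variable {d : ℕ}

/-- The sequence of matrices obtained by restricting every term of `f` to the indices in `c`. -/
def restrictSeq (c : Set (Fin d)) (f : ℕ → Fin d → Fin d → EReal) : ℕ → Fin d → Fin d → EReal :=
  fun k => mpRestrict c (f k)

/-- A nonnegative real number dominating every entry of a matrix over `ℝ_max`. -/
def entryBound (M : Fin d → Fin d → EReal) : ℝ := ∑ i, (⨆ j, M i j).toReal⁺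

lemma entryBound_nonneg (M : Fin d → Fin d → EReal) : 0 ≤ entryBound M :=
  Finset.sum_nonneg fun _ _ => posPart_nonneg _

lemma iSup_entry_ne_top {M : Fin d → Fin d → EReal} (hM : ∀ i j, M i j ≠ ⊤) (i : Fin d) :
    ⨆ j, M i j ≠ ⊤ := by
  have : Nonempty (Fin d) := ⟨i⟩
  obtain ⟨j, hj⟩ := exists_eq_ciSup_of_finite (f := M i)
  exact hj ▸ hM i j

lemma le_entryBound {M : Fin d → Fin d → EReal} (hM : ∀ i j, M i j ≠ ⊤) (i j : Fin d) :
    M i j ≤ (entryBound M : EReal) := by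
  calc M i j ≤ ⨆ j, M i j := le_iSup (M i) j
    _ ≤ ((⨆ j, M i j).toReal : EReal) := EReal.le_coe_toReal (iSup_entry_ne_top hM i)
    _ ≤ ((⨆ j, M i j).toReal⁺ : ℝ) := by exact_mod_cast le_posPart _
    _ ≤ (entryBound M : EReal) := by
      exact_mod_cast Finset.single_le_sum (f := fun i => (⨆ j, M i j).toReal⁺)
        (fun _ _ => posPart_nonneg _) (Finset.mem_univ i)

lemma toReal_posPart_mono {x y : EReal} (hxy : x ≤ y) (hy : y ≠ ⊤) :
    x.toReal⁺ ≤ y.toReal⁺ := by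
  rcases eq_or_ne x ⊥ with rfl | hx
  · simp [posPart_nonneg]
  · exact posPart_mono (EReal.toReal_le_toReal hxy hx hy)

lemma mpRestrict_le (c : Set (Fin d)) (M : Fin d → Fin d → EReal) (i j : Fin d) :
    mpRestrict c M i j ≤ M i j := by
  unfold mpRestrict
  split_ifs <;> simp

lemma mpRestrict_of_mem {c : Set (Fin d)} {i j : Fin d} (hi : i ∈ c) (hj : j ∈ c)
    (M : Fin d → Fin d → EReal) : mpRestrict c M i j = M i j :=
  if_pos ⟨hi, hj⟩

lemma mpRestrict_ne_top {M : Fin d → Fin d → EReal} (hM : ∀ i j, M i j ≠ ⊤) (c : Set (Fin d))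
    (i j : Fin d) : mpRestrict c M i j ≠ ⊤ :=
  ((mpRestrict_le c M i j).trans_lt (hM i j).lt_top).ne

lemma entryBound_mpRestrict_le {M : Fin d → Fin d → EReal} (hM : ∀ i j, M i j ≠ ⊤)
    (c : Set (Fin d)) : entryBound (mpRestrict c M) ≤ entryBound M :=
  Finset.sum_le_sum fun i _ =>
    toReal_posPart_mono (iSup_mono fun j => mpRestrict_le c M i j) (iSup_entry_ne_top hM i)

lemma mpVec_le_iff {M : Fin d → Fin d → EReal} {v : Fin d → EReal} {i : Fin d} {b : EReal} :
    mpVec M v i ≤ b ↔ ∀ j, M i j + v j ≤ b :=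
  iSup_le_iff

lemma le_mpVec (M : Fin d → Fin d → EReal) (v : Fin d → EReal) (i j : Fin d) :
    M i j + v j ≤ mpVec M v i :=
  le_iSup (fun j => M i j + v j) j

lemma appProd_succ (n : ℕ) (f : ℕ → Fin d → Fin d → EReal) (v : Fin d → EReal) :
    appProd (n + 1) f v = mpVec (f 0) (appProd n (shiftSeq 1 f) v) := rfl

lemma lvec_zero (f : ℕ → Fin d → Fin d → EReal) (i : Fin d) : lvec 0 f i = 0 := rfl

lemma lvec_succ (n : ℕ) (f : ℕ → Fin d → Fin d → EReal) :
    lvec (n + 1) f = mpVec (f 0) (lvec n (shiftSeq 1 f)) := rfl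

lemma lvec_succ_consSeq (n : ℕ) (M : Fin d → Fin d → EReal) (f : ℕ → Fin d → Fin d → EReal) :
    lvec (n + 1) (consSeq M f) = mpVec M (lvec n f) := rfl

lemma appProd_add (l m : ℕ) (f : ℕ → Fin d → Fin d → EReal) (v : Fin d → EReal) :
    appProd (l + m) f v = appProd l f (appProd m (shiftSeq l f) v) := by
  induction l generalizing f with
  | zero => simp only [Nat.zero_add, appProd, shiftSeq_zero]
  | succ l ih =>
    rw [Nat.succ_add, appProd_succ, appProd_succ, ih, shiftSeq_shiftSeq, Nat.add_comm 1 l]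

lemma lvec_add (l m : ℕ) (f : ℕ → Fin d → Fin d → EReal) :
    lvec (l + m) f = appProd l f (lvec m (shiftSeq l f)) :=
  appProd_add l m f _

lemma appProd_mono {n : ℕ} {f g : ℕ → Fin d → Fin d → EReal} {v w : Fin d → EReal}
    (hfg : ∀ k i j, f k i j ≤ g k i j) (hvw : ∀ i, v i ≤ w i) (i : Fin d) :
    appProd n f v i ≤ appProd n g w i := by
  induction n generalizing f g i with
  | zero => exact hvw i
  | succ n ih =>
    rw [appProd_succ, appProd_succ, mpVec_le_iff]
    exact fun j => (add_le_add (hfg 0 i j) (ih (fun k => hfg (k + 1)) j)).trans (le_mpVec _ _ i j)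

lemma lvec_restrictSeq_le (c : Set (Fin d)) (n : ℕ) (f : ℕ → Fin d → Fin d → EReal) (i : Fin d) :
    lvec n (restrictSeq c f) i ≤ lvec n f i :=
  appProd_mono (fun k => mpRestrict_le c (f k)) (fun _ => le_rfl) i

lemma mpVec_mpRestrict_of_notMem {c : Set (Fin d)} {i : Fin d} (hi : i ∉ c)
    (M : Fin d → Fin d → EReal) (v : Fin d → EReal) : mpVec (mpRestrict c M) v i = ⊥ := by
  simp [mpVec, mpRestrict, hi]

lemma appProd_le_add {R : Set (Fin d)} {n : ℕ} {f : ℕ → Fin d → Fin d → EReal}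
    {v w : Fin d → EReal} {s : EReal} (hR : ∀ k, ∀ i ∈ R, ∀ j, f k i j ≠ ⊥ → j ∈ R)
    (hvw : ∀ i ∈ R, v i ≤ w i + s) {i : Fin d} (hi : i ∈ R) :
    appProd n f v i ≤ appProd n f w i + s := by
  induction n generalizing f i with
  | zero => exact hvw i hi
  | succ n ih =>
    rw [appProd_succ, appProd_succ, mpVec_le_iff]
    intro j
    by_cases hij : f 0 i j = ⊥
    · simp [hij]
    calc f 0 i j + appProd n (shiftSeq 1 f) v j
        ≤ f 0 i j + (appProd n (shiftSeq 1 f) w j + s) := by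
          gcongr
          exact ih (fun k => hR (k + 1)) (hR 0 i hi j hij)
      _ = f 0 i j + appProd n (shiftSeq 1 f) w j + s := (add_assoc _ _ _).symm
      _ ≤ _ := by gcongr; exact le_mpVec _ _ i j

lemma appProd_le_sum_entryBound {R : Set (Fin d)} {n : ℕ} {f : ℕ → Fin d → Fin d → EReal}
    {v : Fin d → EReal} {s : ℝ} (hf : ∀ k i j, f k i j ≠ ⊤)
    (hR : ∀ k, ∀ i ∈ R, ∀ j, f k i j ≠ ⊥ → j ∈ R)
    (hv : ∀ i ∈ R, v i ≤ (s : EReal)) {i : Fin d} (hi : i ∈ R) :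
    appProd n f v i ≤ ((∑ k ∈ Finset.range n, entryBound (f k) + s : ℝ) : EReal) := by
  induction n generalizing f i with
  | zero => simpa [appProd] using hv i hi
  | succ n ih =>
    rw [appProd_succ, mpVec_le_iff]
    intro j
    by_cases hij : f 0 i j = ⊥
    · simp [hij]
    refine (add_le_add (le_entryBound (hf 0) i j) (ih (fun k => hf (k + 1))
      (fun k => hR (k + 1)) (hR 0 i hi j hij))).trans_eq ?_
    rw [← EReal.coe_add, Finset.sum_range_succ', ← add_assoc, add_comm (entryBound (f 0))]

lemma lvec_le_sum_entryBound {f : ℕ → Fin d → Fin d → EReal} (hf : ∀ k i j, f k i j ≠ ⊤) (n : ℕ)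
    (i : Fin d) : lvec n f i ≤ ((∑ k ∈ Finset.range n, entryBound (f k) : ℝ) : EReal) := by
  simpa [lvec] using appProd_le_sum_entryBound (n := n) (R := Set.univ) (v := fun _ => 0) (s := 0)
    hf (fun _ _ _ _ _ => Set.mem_univ _) (fun _ _ => le_rfl) (Set.mem_univ i)

/-- A path starting in `c` either stays in `c`, or leaves it at some time for the lower set `l`. -/
lemma appProd_le_max {c l : Set (Fin d)} {f : ℕ → Fin d → Fin d → EReal} {v : Fin d → EReal}
    {s t : ℝ} (hf : ∀ k i j, f k i j ≠ ⊤) (hc : ∀ k, ∀ i ∈ c, ∀ j, f k i j ≠ ⊥ → j ∈ c ∪ l)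
    (hl : ∀ k, ∀ i ∈ l, ∀ j, f k i j ≠ ⊥ → j ∈ l)
    (hvc : ∀ i ∈ c, v i ≤ (s : EReal)) (hvl : ∀ i ∈ l, v i ≤ (t : EReal))
    {n : ℕ} {i : Fin d} (hi : i ∈ c) :
    appProd n f v i ≤ max (lvec n (restrictSeq c f) i + s)
      ((∑ k ∈ Finset.range n, entryBound (f k) + t : ℝ) : EReal) := by
  induction n generalizing f i with
  | zero => exact le_max_of_le_left (by simpa [appProd, lvec_zero] using hvc i hi)
  | succ n ih =>
    rw [appProd_succ, mpVec_le_iff]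
    intro j
    by_cases hij : f 0 i j = ⊥
    · simp [hij]
    have hexit : appProd n (shiftSeq 1 f) v j ≤
          ((∑ k ∈ Finset.range n, entryBound (f (k + 1)) + t : ℝ) : EReal) →
        f 0 i j + appProd n (shiftSeq 1 f) v j ≤
          ((∑ k ∈ Finset.range (n + 1), entryBound (f k) + t : ℝ) : EReal) := by
      intro h
      refine (add_le_add (le_entryBound (hf 0) i j) h).trans_eq ?_
      rw [← EReal.coe_add, Finset.sum_range_succ', ← add_assoc, add_comm (entryBound (f 0))]
    rcases hc 0 i hi j hij with hj | hj
    · rcases le_max_iff.1 (ih (f := shiftSeq 1 f) (fun k => hf (k + 1)) (fun k => hc (k + 1))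
        (fun k => hl (k + 1)) hj) with h | h
      · refine le_max_of_le_left ((add_le_add_right h (f 0 i j)).trans ?_)
        rw [← add_assoc, ← mpRestrict_of_mem hi hj (f 0), lvec_succ]
        exact add_le_add_left (le_mpVec (mpRestrict c (f 0)) _ i j) _
      · exact le_max_of_le_right (hexit h)
    · exact le_max_of_le_right (hexit (appProd_le_sum_entryBound (fun k => hf (k + 1))
        (fun k => hl (k + 1)) hvl hj))

lemma appProd_mul_le {R : Set (Fin d)} {f : ℕ → Fin d → Fin d → EReal} {v : Fin d → EReal}
    {N : ℕ} {D : ℕ → ℝ} (hR : ∀ k, ∀ i ∈ R, ∀ j, f k i j ≠ ⊥ → j ∈ R)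
    (hD : ∀ k, ∀ i ∈ R, appProd N (shiftSeq (k * N) f) v i ≤ v i + (D k : EReal))
    (n : ℕ) {i : Fin d} (hi : i ∈ R) :
    appProd (n * N) f v i ≤ v i + ((∑ k ∈ Finset.range n, D k : ℝ) : EReal) := by
  induction n generalizing i with
  | zero => simp [appProd]
  | succ n ih =>
    rw [Nat.succ_mul, appProd_add]
    refine (appProd_le_add hR (hD n) hi).trans ((add_le_add_left (ih hi) _).trans_eq ?_)
    rw [add_assoc, ← EReal.coe_add, Finset.sum_range_succ]

end MaxPlusProducts

section ProductMeasures

variable {ι : Type*} {X : ι → Type*} [∀ i, MeasurableSpace (X i)]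

lemma measurable_cylinderEvents_of_dependsOn {F : Type*} [MeasurableSpace F]
    {Φ : (∀ i, X i) → F} (hΦ : Measurable Φ) {S : Set ι} (hS : DependsOn Φ S) :
    Measurable[cylinderEvents S] Φ := by
  classical
  rcases isEmpty_or_nonempty (∀ i, X i) with _ | ⟨⟨f₀⟩⟩
  · exact fun s _ => (Subsingleton.elim ∅ (Φ ⁻¹' s)) ▸ @MeasurableSet.empty _ (cylinderEvents S)
  have hpw : Measurable[cylinderEvents S] fun f => S.piecewise f f₀ := by
    refine @measurable_pi_lambda _ _ _ (cylinderEvents S) _ _ fun i => ?_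
    by_cases hi : i ∈ S
    · simpa only [Set.piecewise_eq_of_mem _ _ _ hi] using measurable_cylinderEvent_apply hi
    · simpa only [Set.piecewise_eq_of_notMem _ _ _ hi] using
        @measurable_const _ _ _ (cylinderEvents S) _
  have hΦpw : Φ = Φ ∘ fun f => S.piecewise f f₀ :=
    funext fun f => hS fun i hi => (Set.piecewise_eq_of_mem S f f₀ hi).symm
  rw [hΦpw]
  exact hΦ.comp hpw

lemma indepFun_infinitePi_of_dependsOn (P : ∀ i, Measure (X i)) [∀ i, IsProbabilityMeasure (P i)]
    {F G : Type*} [MeasurableSpace F] [MeasurableSpace G] {Φ : (∀ i, X i) → F}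
    {Ψ : (∀ i, X i) → G} (hΦ : Measurable Φ) (hΨ : Measurable Ψ) {S T : Set ι}
    (hST : Disjoint S T) (hS : DependsOn Φ S) (hT : DependsOn Ψ T) :
    IndepFun Φ Ψ (Measure.infinitePi P) := by
  have hind : Indep (cylinderEvents S) (cylinderEvents T) (Measure.infinitePi P) :=
    indep_iSup_of_disjoint (fun i => (measurable_pi_apply i).comap_le)
      (iIndepFun_infinitePi (X := fun _ M => M) fun _ => measurable_id).iIndep hST
  rw [IndepFun_iff_Indep]
  exact indep_of_indep_of_le_left (indep_of_indep_of_le_right hind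
    (measurable_cylinderEvents_of_dependsOn hΨ hT).comap_le)
    (measurable_cylinderEvents_of_dependsOn hΦ hS).comap_le

lemma integral_comp_of_measurePreserving {α β : Type*} [MeasurableSpace α] [MeasurableSpace β]
    {μ : Measure α} {ν : Measure β} {g : α → β} (hg : MeasurePreserving g μ ν) {Φ : β → ℝ}
    (hΦ : AEStronglyMeasurable Φ ν) : ∫ x, Φ (g x) ∂μ = ∫ y, Φ y ∂ν := by
  rw [← hg.map_eq] at hΦ ⊢
  exact (integral_map hg.measurable.aemeasurable hΦ).symm

lemma measure_eq_zero_of_forall_measure_inter_le {Ω : Type*} [MeasurableSpace Ω] {μ : Measure Ω}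
    [IsFiniteMeasure μ] {𝒜 : Set (Set Ω)} (h𝒜 : μ.MeasureDense 𝒜) {D : Set Ω}
    (hD : MeasurableSet D) {q : ℝ} (hq : q < 1)
    (h : ∀ G ∈ 𝒜, μ.real (D ∩ G) ≤ q * μ.real G) : μ D = 0 := by
  have happrox : ∀ ε > 0, (1 - q) * μ.real D ≤ (1 + |q|) * ε := by
    intro ε hε
    obtain ⟨G, hG, hDG⟩ := h𝒜.approx D hD (measure_ne_top _ _) ε hε
    have hdiff : μ.real (symmDiff D G) ≤ ε := ENNReal.toReal_le_of_le_ofReal hε.le hDG.le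
    have hinter : μ.real D ≤ μ.real (D ∩ G) + μ.real (symmDiff D G) :=
      (measureReal_mono fun ω hω => by
        by_cases hG : ω ∈ G <;> simp [hω, hG, Set.mem_symmDiff]).trans (measureReal_union_le _ _)
    have hDG : |μ.real G - μ.real D| ≤ μ.real (symmDiff D G) := by
      rw [symmDiff_comm]
      exact abs_measureReal_sub_le_measureReal_symmDiff' (h𝒜.measurable G hG).nullMeasurableSet
        hD.nullMeasurableSet (measure_ne_top _ _) (measure_ne_top _ _)
    have hq' : q * (μ.real G - μ.real D) ≤ |q| * ε :=
      (le_abs_self _).trans ((abs_mul _ _).trans_le (by gcongr; exact hDG.trans hdiff))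
    linarith [h G hG]
  have hle : (1 - q) * μ.real D ≤ 0 := by
    refine le_of_forall_pos_le_add fun ε hε => ?_
    have hq0 : 0 < 1 + |q| := by positivity
    simpa [mul_div_cancel₀ _ hq0.ne'] using happrox (ε / (1 + |q|)) (by positivity)
  have h0 : μ.real D = 0 := le_antisymm (by nlinarith) measureReal_nonneg
  exact (measureReal_eq_zero_iff (measure_ne_top _ _)).1 h0

end ProductMeasures

section IIDSequences

variable {E : Type*} [MeasurableSpace E]

/-- The law of an i.i.d. sequence with marginal law `ν`. -/
def seqLaw (ν : Measure E) : Measure (ℕ → E) := Measure.infinitePi fun _ => ν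

instance (ν : Measure E) [IsProbabilityMeasure ν] : IsProbabilityMeasure (seqLaw ν) := by
  unfold seqLaw
  infer_instance

lemma measurePreserving_seqLaw {Ω ι : Type*} [MeasurableSpace Ω] {μ : Measure Ω} {ν : Measure E}
    {X : ι → Ω → E} (hX : ∀ i, Measurable (X i))
    (hind : iIndepFun X μ) (hlaw : ∀ i, μ.map (X i) = ν) {e : ℕ → ι} (he : e.Injective) :
    MeasurePreserving (fun ω k => X (e k) ω) μ (seqLaw ν) := by
  refine ⟨measurable_pi_iff.2 fun k => hX (e k), ?_⟩
  rw [(hind.precomp he).map_fun_eq_infinitePi_map fun k => hX (e k), seqLaw]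
  simp only [hlaw]

variable (ν : Measure E) [IsProbabilityMeasure ν]

lemma iIndepFun_eval_seqLaw : iIndepFun (fun (k : ℕ) (f : ℕ → E) => f k) (seqLaw ν) :=
  iIndepFun_infinitePi (X := fun _ M => M) fun _ => measurable_id

lemma measurePreserving_eval_seqLaw (k : ℕ) :
    MeasurePreserving (fun f : ℕ → E => f k) (seqLaw ν) ν :=
  measurePreserving_eval_infinitePi (fun _ : ℕ => ν) k

lemma measurePreserving_seqLaw_map {E' : Type*} [MeasurableSpace E'] {g : E → E'}
    (hg : Measurable g) :
    MeasurePreserving (fun (f : ℕ → E) k => g (f k)) (seqLaw ν) (seqLaw (ν.map g)) :=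
  ⟨measurable_pi_iff.2 fun k => hg.comp (measurable_pi_apply k),
    Measure.infinitePi_map_pi (fun _ : ℕ => ν) fun _ => hg⟩

lemma measurePreserving_shiftSeq (n : ℕ) :
    MeasurePreserving (shiftSeq (E := E) n) (seqLaw ν) (seqLaw ν) :=
  measurePreserving_seqLaw (fun k => measurable_pi_apply k) (iIndepFun_eval_seqLaw ν)
    (fun k => (measurePreserving_eval_seqLaw ν k).map_eq) (add_left_injective n)

lemma measurable_consSeq : Measurable fun p : E × (ℕ → E) => consSeq p.1 p.2 := by
  refine measurable_pi_iff.2 fun k => ?_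
  cases k with
  | zero => exact measurable_fst
  | succ k => exact (measurable_pi_apply k).comp measurable_snd

lemma measurePreserving_consSeq :
    MeasurePreserving (fun p : E × (ℕ → E) => consSeq p.1 p.2) (ν.prod (seqLaw ν)) (seqLaw ν) := by
  refine ⟨measurable_consSeq, ?_⟩
  have hhead := measurePreserving_eval_seqLaw ν 0
  have htail := measurePreserving_shiftSeq ν 1
  have hind : IndepFun (fun f : ℕ → E => f 0) (shiftSeq 1) (seqLaw ν) :=
    indepFun_infinitePi_of_dependsOn (fun _ => ν) hhead.measurable htail.measurable
      (S := {0}) (T := {0}ᶜ) disjoint_compl_right (fun _ _ h => h 0 rfl)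
      fun _ _ h => funext fun k => h (k + 1) (Nat.succ_ne_zero k)
  have hmap := (indepFun_iff_map_prod_eq_prod_map_map hhead.measurable.aemeasurable
    htail.measurable.aemeasurable).1 hind
  rw [hhead.map_eq, htail.map_eq] at hmap
  rw [← hmap, Measure.map_map measurable_consSeq (hhead.measurable.prodMk htail.measurable)]
  convert Measure.map_id using 2
  exact funext consSeq_shiftSeq_one

lemma seqLaw_apply_eq_lintegral_consSeq {S : Set (ℕ → E)} (hS : MeasurableSet S) :
    seqLaw ν S = ∫⁻ M, seqLaw ν (consSeq M ⁻¹' S) ∂ν := by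
  rw [← (measurePreserving_consSeq ν).measure_preimage hS.nullMeasurableSet,
    Measure.prod_apply (measurable_consSeq hS)]
  rfl

variable {ν}

lemma ae_consSeq_of_ae {p : (ℕ → E) → Prop} (hp : ∀ᵐ f ∂(seqLaw ν), p f) :
    ∀ᵐ M ∂ν, ∀ᵐ f ∂(seqLaw ν), p (consSeq M f) :=
  Measure.ae_ae_of_ae_prod ((measurePreserving_consSeq ν).quasiMeasurePreserving.ae hp)

lemma tendsto_blockAverage {N : ℕ} (hN : 0 < N) {Φ : (ℕ → E) → ℝ} (hΦ : Measurable Φ)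
    (hint : Integrable Φ (seqLaw ν)) (hdep : DependsOn Φ (Set.Iio N)) :
    ∀ᵐ f ∂(seqLaw ν), Tendsto
      (fun n : ℕ => (∑ k ∈ Finset.range n, Φ (shiftSeq (k * N) f)) / n)
      atTop (𝓝 (∫ f, Φ f ∂(seqLaw ν))) := by
  have hshift (k : ℕ) := measurePreserving_shiftSeq ν (k * N)
  have hblock : ∀ k, DependsOn (fun f => Φ (shiftSeq (k * N) f)) ((· / N) ⁻¹' {k}) :=
    fun k f g hfg => hdep fun l hl => hfg _ <| by
      simp [Nat.add_mul_div_right l k hN, Nat.div_eq_of_lt hl]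
  have h := strong_law_ae_real (μ := seqLaw ν) (fun k f => Φ (shiftSeq (k * N) f))
    (by simpa [shiftSeq_zero] using hint)
    (fun a b hab => indepFun_infinitePi_of_dependsOn _ (hΦ.comp (hshift a).measurable)
      (hΦ.comp (hshift b).measurable)
      (Disjoint.preimage _ (Set.disjoint_singleton.2 hab)) (hblock a) (hblock b))
    (fun k => ⟨(hΦ.comp (hshift k).measurable).aemeasurable,
      (hΦ.comp (hshift 0).measurable).aemeasurable,
      (((hΦ.measurePreserving _).comp (hshift k)).map_eq).trans
        ((hΦ.measurePreserving _).comp (hshift 0)).map_eq.symm⟩)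
  simpa [shiftSeq_zero] using h

lemma seqLaw_inter_le_of_consSeq {ι : Type*} {K : Set ι} {D : ι → Set (ℕ → E)}
    (hD : ∀ i, MeasurableSet (D i))
    (hstep : ∀ i ∈ K, ∀ᵐ M ∂ν, ∃ j ∈ K, consSeq M ⁻¹' D i ⊆ D j) {q : ENNReal}
    (hq : ∀ i ∈ K, seqLaw ν (D i) ≤ q) (n : ℕ) {G : Set (ℕ → E)} (hG : MeasurableSet G)
    (hdep : DependsOn (· ∈ G) (Set.Iio n)) {i : ι} (hi : i ∈ K) :
    seqLaw ν (D i ∩ G) ≤ q * seqLaw ν G := by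
  induction n generalizing G i with
  | zero =>
    have hconst : ∀ f g, f ∈ G ↔ g ∈ G := fun f g => iff_of_eq (hdep fun k hk => by simp at hk)
    rcases G.eq_empty_or_nonempty with rfl | ⟨f, hf⟩
    · simp
    · simpa [Set.eq_univ_of_forall fun g => (hconst f g).1 hf] using hq i hi
  | succ n ih =>
    have hcons (M : E) : Measurable (consSeq M) := measurable_consSeq.comp measurable_prodMk_left
    calc seqLaw ν (D i ∩ G)
        = ∫⁻ M, seqLaw ν (consSeq M ⁻¹' (D i ∩ G)) ∂ν :=
          seqLaw_apply_eq_lintegral_consSeq ν ((hD i).inter hG)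
      _ ≤ ∫⁻ M, q * seqLaw ν (consSeq M ⁻¹' G) ∂ν := by
          refine lintegral_mono_ae ?_
          filter_upwards [hstep i hi] with M ⟨j, hj, hij⟩
          refine (measure_mono (Set.inter_subset_inter_left _ hij)).trans
            (ih (hcons M hG) (fun f g hfg => hdep fun k hk => ?_) hj)
          cases k with
          | zero => rfl
          | succ k => exact hfg k (Nat.lt_of_succ_lt_succ hk)
      _ = q * seqLaw ν G := by
          rw [seqLaw_apply_eq_lintegral_consSeq ν hG]
          exact lintegral_const_mul _ (measurable_measure_prodMk_left (measurable_consSeq hG))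

/-- A zero-one law: prepending a random term moves the index `i` inside `K` while the event `D i`
persists. Hence conditioning on finitely many terms never raises the probability of `D i`
above `q`. -/
lemma seqLaw_eq_zero_of_consSeq {ι : Type*} {K : Set ι} {D : ι → Set (ℕ → E)}
    (hD : ∀ i, MeasurableSet (D i))
    (hstep : ∀ i ∈ K, ∀ᵐ M ∂ν, ∃ j ∈ K, consSeq M ⁻¹' D i ⊆ D j) {q : ENNReal} (hq1 : q < 1)
    (hq : ∀ i ∈ K, seqLaw ν (D i) ≤ q) {i : ι} (hi : i ∈ K) : seqLaw ν (D i) = 0 := by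
  have hdense : (seqLaw ν).MeasureDense (measurableCylinders fun _ : ℕ => E) :=
    Measure.MeasureDense.of_generateFrom_isSetAlgebra_finite _
      isSetAlgebra_measurableCylinders generateFrom_measurableCylinders.symm
  have hq_top : q ≠ ⊤ := (hq1.trans ENNReal.one_lt_top).ne
  refine measure_eq_zero_of_forall_measure_inter_le hdense (hD i) (q := q.toReal)
    (by simpa using ENNReal.toReal_strict_mono ENNReal.one_ne_top hq1) fun G hG => ?_
  have hGm : MeasurableSet G := hdense.measurable G hG
  obtain ⟨s, S, -, rfl⟩ := (mem_measurableCylinders G).1 hG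
  have hdep : DependsOn (· ∈ cylinder (α := fun _ : ℕ => E) s S) (Set.Iio (s.sup id + 1)) := by
    intro f g hfg
    have : s.restrict f = s.restrict g :=
      funext fun k => hfg k (Nat.lt_succ_of_le (Finset.le_sup (f := id) k.2))
    simp only [mem_cylinder, this]
  rw [measureReal_def, measureReal_def, ← ENNReal.toReal_mul]
  exact ENNReal.toReal_mono (ENNReal.mul_ne_top hq_top (measure_ne_top _ _))
    (seqLaw_inter_le_of_consSeq hD hstep hq _ hGm hdep hi)

end IIDSequences

section MaxPlusMeasurability

variable {d : ℕ}

lemma dependsOn_appProd (n : ℕ) (v : Fin d → EReal) :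
    DependsOn (fun f : ℕ → Fin d → Fin d → EReal => appProd n f v) (Set.Iio n) := by
  induction n with
  | zero => exact fun _ _ _ => rfl
  | succ n ih =>
    intro f g h
    simp only [appProd_succ]
    rw [h 0 n.succ_pos]
    exact congrArg _ (ih fun k hk => h (k + 1) (Nat.succ_lt_succ hk))

lemma measurable_entry (i j : Fin d) : Measurable fun M : Fin d → Fin d → EReal => M i j :=
  (measurable_pi_apply j).comp (measurable_pi_apply i)

lemma measurable_lvec (n : ℕ) (i : Fin d) :
    Measurable fun f : ℕ → Fin d → Fin d → EReal => lvec n f i := by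
  induction n generalizing i with
  | zero => exact measurable_const
  | succ n ih =>
    simp only [lvec_succ, mpVec]
    exact Measurable.iSup fun j => ((measurable_entry i j).comp (measurable_pi_apply 0)).add
      ((ih j).comp (measurable_pi_iff.2 fun k => measurable_pi_apply (k + 1)))

lemma measurable_mpRestrict (c : Set (Fin d)) : Measurable (mpRestrict c) := by
  classical
  refine measurable_pi_iff.2 fun i => measurable_pi_iff.2 fun j => ?_
  by_cases h : i ∈ c ∧ j ∈ c
  · simpa only [mpRestrict, if_pos h] using measurable_entry i j
  · simpa only [mpRestrict, if_neg h] using measurable_const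

lemma measurable_entryBound : Measurable (entryBound (d := d)) :=
  Finset.measurable_sum _ fun i _ =>
    (measurable_ereal_toReal.comp (Measurable.iSup fun j => measurable_entry i j)).sup_const 0

lemma measurableSet_forall_ne_top :
    MeasurableSet {M : Fin d → Fin d → EReal | ∀ i j, M i j ≠ ⊤} := by
  simp only [Set.ofPred_forall]
  exact .iInter fun i => .iInter fun j => measurable_entry i j (measurableSet_singleton ⊤).compl

lemma measurableSet_of_support (Q : (Fin d → Fin d → Prop) → Prop) :
    MeasurableSet {M : Fin d → Fin d → EReal | Q fun i j => M i j ≠ ⊥} := by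
  have hsupp : Measurable fun (M : Fin d → Fin d → EReal) (i j : Fin d) => M i j ≠ ⊥ :=
    measurable_pi_iff.2 fun i => measurable_pi_iff.2 fun j =>
      measurableSet_setOfPred.1 (measurable_entry i j (measurableSet_singleton ⊥).compl)
  exact hsupp (Set.toFinite {p | Q p}).measurableSet

lemma ae_arcRel {Ω : Type*} [MeasurableSpace Ω] (μ : Measure Ω)
    (A : Ω → Fin d → Fin d → EReal) : ∀ᵐ ω ∂μ, ∀ i j, A ω i j ≠ ⊥ → arcRel μ A i j := by
  simp only [ae_all_iff]
  intro i j
  by_cases hij : arcRel μ A i j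
  · exact Eventually.of_forall fun _ _ => hij
  · exact (measure_eq_zero_iff_ae_notMem.1 (not_not.1 hij)).mono fun ω hω h => absurd h hω

variable {ν : Measure (Fin d → Fin d → EReal)}

lemma ae_ne_top_map_mpRestrict (htop : ∀ᵐ M ∂ν, ∀ i j, M i j ≠ ⊤) (c : Set (Fin d)) :
    ∀ᵐ M ∂(ν.map (mpRestrict c)), ∀ i j, M i j ≠ ⊤ :=
  (ae_map_iff (measurable_mpRestrict c).aemeasurable measurableSet_forall_ne_top).2
    (htop.mono fun _ hM => mpRestrict_ne_top hM c)

lemma integrable_entryBound_map_mpRestrict (htop : ∀ᵐ M ∂ν, ∀ i j, M i j ≠ ⊤)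
    (hX : Integrable entryBound ν) (c : Set (Fin d)) :
    Integrable entryBound (ν.map (mpRestrict c)) := by
  have hc := measurable_mpRestrict c
  refine (integrable_map_measure measurable_entryBound.aestronglyMeasurable hc.aemeasurable).2 ?_
  refine hX.mono' (measurable_entryBound.comp hc).aestronglyMeasurable ?_
  filter_upwards [htop] with M hM
  exact (Real.norm_of_nonneg (entryBound_nonneg _)).trans_le (entryBound_mpRestrict_le hM c)

variable [IsProbabilityMeasure ν]

lemma measurePreserving_restrictSeq (c : Set (Fin d)) :
    MeasurePreserving (restrictSeq c) (seqLaw ν) (seqLaw (ν.map (mpRestrict c))) :=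
  measurePreserving_seqLaw_map ν (measurable_mpRestrict c)

lemma ae_seqLaw_forall {p : (Fin d → Fin d → EReal) → Prop} (hp : ∀ᵐ M ∂ν, p M) :
    ∀ᵐ f ∂(seqLaw ν), ∀ k, p (f k) :=
  ae_all_iff.2 fun k => (measurePreserving_eval_seqLaw ν k).quasiMeasurePreserving.ae hp

end MaxPlusMeasurability

section GrowthSets

variable {d : ℕ}

lemma lt_mpScale_iff {n : ℕ} (hn : 0 < n) {y : EReal} {a : ℝ} :
    (a : EReal) < mpScale n y ↔ ((a * n : ℝ) : EReal) < y := by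
  have hinv : (0 : ℝ) < (n : ℝ)⁻¹ := inv_pos.2 (by exact_mod_cast hn)
  unfold mpScale
  induction y with
  | bot => simp [EReal.coe_mul_bot_of_pos hinv]
  | top => simp only [EReal.coe_mul_top_of_pos hinv, EReal.coe_lt_top]
  | coe y =>
    rw [← EReal.coe_mul, EReal.coe_lt_coe_iff, EReal.coe_lt_coe_iff, inv_mul_eq_div,
      lt_div_iff₀ (by exact_mod_cast hn)]

/-- The sequences along which `lvec` grows at node `i` at speed at least `a`, up to a constant. -/
def growthSet (i : Fin d) (a : ℝ) : Set (ℕ → Fin d → Fin d → EReal) :=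
  {f | ∃ C : ℕ, ∀ n : ℕ, ((a * n - C : ℝ) : EReal) ≤ lvec n f i}

lemma measurableSet_growthSet (i : Fin d) (a : ℝ) : MeasurableSet (growthSet i a) := by
  simp only [growthSet, Set.ofPred_exists, Set.ofPred_forall]
  exact .iUnion fun C => .iInter fun n => measurableSet_le measurable_const (measurable_lvec n i)

lemma mem_growthSet_of_forall_pos {i : Fin d} {a : ℝ} {f : ℕ → Fin d → Fin d → EReal} {C : ℝ}
    (h : ∀ n : ℕ, 0 < n → ((a * n - C : ℝ) : EReal) ≤ lvec n f i) : f ∈ growthSet i a := by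
  obtain ⟨C', hC'⟩ := exists_nat_ge (max C 0)
  refine ⟨C', fun n => ?_⟩
  rcases n.eq_zero_or_pos with rfl | hn
  · rw [lvec_zero]
    exact_mod_cast by simp
  · refine le_trans ?_ (h n hn)
    exact_mod_cast sub_le_sub_left ((le_max_left C 0).trans hC') _

lemma consSeq_mem_growthSet {i j : Fin d} {a : ℝ} {M : Fin d → Fin d → EReal} (hij : M i j ≠ ⊥)
    {f : ℕ → Fin d → Fin d → EReal} (hf : f ∈ growthSet j a) : consSeq M f ∈ growthSet i a := by
  obtain ⟨C, hC⟩ := hf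
  obtain ⟨w, -, hw⟩ := EReal.lt_iff_exists_real_btwn.1 (bot_lt_iff_ne_bot.2 hij)
  refine mem_growthSet_of_forall_pos (C := C + a - w) fun n hn => ?_
  obtain ⟨n, rfl⟩ := Nat.exists_eq_succ_of_ne_zero hn.ne'
  rw [lvec_succ_consSeq]
  refine le_trans (le_of_eq ?_) ((add_le_add hw.le (hC n)).trans (le_mpVec _ _ i j))
  rw [← EReal.coe_add]
  exact congrArg _ (by push_cast; ring)

lemma mem_growthSet_of_restrictSeq_mem {c : Set (Fin d)} {i : Fin d} {a : ℝ}
    {f : ℕ → Fin d → Fin d → EReal} (hf : restrictSeq c f ∈ growthSet i a) : f ∈ growthSet i a :=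
  hf.imp fun _ hC n => (hC n).trans (lvec_restrictSeq_le c n f i)

lemma restrictSeq_notMem_growthSet {c : Set (Fin d)} {i : Fin d} (hi : i ∉ c) (a : ℝ)
    (f : ℕ → Fin d → Fin d → EReal) : restrictSeq c f ∉ growthSet i a := by
  rintro ⟨C, hC⟩
  have h := hC 1
  rw [lvec_succ, restrictSeq, mpVec_mpRestrict_of_notMem hi] at h
  exact EReal.coe_ne_bot _ (le_bot_iff.1 h)

lemma eventually_lt_mpScale_of_mem_growthSet {i : Fin d} {a b : ℝ}
    {f : ℕ → Fin d → Fin d → EReal} (hf : f ∈ growthSet i a) (hb : b < a) :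
    ∀ᶠ n in atTop, (b : EReal) < mpScale n (lvec n f i) := by
  obtain ⟨C, hC⟩ := hf
  have hgap : Tendsto (fun n : ℕ => (a - b) * n) atTop atTop :=
    tendsto_natCast_atTop_atTop.const_mul_atTop (sub_pos.2 hb)
  filter_upwards [hgap.eventually_gt_atTop C, eventually_gt_atTop 0] with n hn hn0
  refine (lt_mpScale_iff hn0).2 (lt_of_lt_of_le ?_ (hC n))
  rw [EReal.coe_lt_coe_iff]
  linarith

lemma le_of_tendsto_of_mem_growthSet {i : Fin d} {a : ℝ} {f : ℕ → Fin d → Fin d → EReal}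
    {L : EReal} (hf : f ∈ growthSet i a)
    (hL : Tendsto (fun n => mpScale n (lvec n f i)) atTop (𝓝 L)) : (a : EReal) ≤ L :=
  EReal.ge_of_forall_gt_iff_ge.1 fun _ hb => ge_of_tendsto hL
    ((eventually_lt_mpScale_of_mem_growthSet hf (EReal.coe_lt_coe_iff.1 hb)).mono fun _ h => h.le)

variable {ν : Measure (Fin d → Fin d → EReal)} [IsProbabilityMeasure ν]

lemma measure_growthSet_ne_zero_of_arcRel {i j : Fin d} {a : ℝ} (hij : arcRel ν id i j)
    (hj : seqLaw ν (growthSet j a) ≠ 0) : seqLaw ν (growthSet i a) ≠ 0 := by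
  contrapose! hj with hi
  have hM : ∃ᵐ M ∂ν, M i j ≠ ⊥ := frequently_ae_iff.2 hij
  obtain ⟨M, hMij, hMf⟩ :=
    (hM.and_eventually (ae_consSeq_of_ae (measure_eq_zero_iff_ae_notMem.1 hi))).exists
  exact measure_eq_zero_iff_ae_notMem.2
    (hMf.mono fun f hf hfj => hf (consSeq_mem_growthSet hMij hfj))

lemma measure_growthSet_ne_zero_of_reach {i j : Fin d} {a : ℝ}
    (hij : Relation.ReflTransGen (arcRel ν id) i j) (hj : seqLaw ν (growthSet j a) ≠ 0) :
    seqLaw ν (growthSet i a) ≠ 0 := by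
  induction hij using Relation.ReflTransGen.head_induction_on with
  | refl => exact hj
  | head h _ ih => exact measure_growthSet_ne_zero_of_arcRel h ih

lemma ae_mem_growthSet {K : Set (Fin d)} {a : ℝ}
    (hK : ∀ᵐ M ∂ν, ∀ i ∈ K, ∃ j ∈ K, M i j ≠ ⊥)
    (hpos : ∀ j ∈ K, seqLaw ν (growthSet j a) ≠ 0) {i : Fin d} (hi : i ∈ K) :
    ∀ᵐ f ∂(seqLaw ν), f ∈ growthSet i a := by
  have hq : K.toFinite.toFinset.sup (fun j => seqLaw ν (growthSet j a)ᶜ) < 1 := by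
    refine (Finset.sup_lt_iff one_pos).2 fun j hj => ?_
    rw [prob_compl_eq_one_sub (measurableSet_growthSet j a)]
    exact ENNReal.sub_lt_self ENNReal.one_ne_top one_ne_zero (hpos j (by simpa using hj))
  refine seqLaw_eq_zero_of_consSeq (K := K) (D := fun j => (growthSet j a)ᶜ)
    (fun j => (measurableSet_growthSet j a).compl) (fun k hk => ?_) hq
    (fun j hj => Finset.le_sup (f := fun j => seqLaw ν (growthSet j a)ᶜ) (by simpa using hj)) hi
  filter_upwards [hK] with M hM
  obtain ⟨j, hj, hkj⟩ := hM k hk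
  exact ⟨j, hj, fun f hf hfj => hf (consSeq_mem_growthSet hkj hfj)⟩

end GrowthSets

section Reversal

variable {d : ℕ}

lemma xvec_eq_lvec {n : ℕ} {f g : ℕ → Fin d → Fin d → EReal}
    (h : ∀ k < n, g k = f (n - 1 - k)) : xvec f n = lvec n g := by
  induction n generalizing g with
  | zero => rfl
  | succ n ih =>
    rw [lvec_succ, xvec, h 0 (by omega)]
    congr 1
    refine ih fun k hk => ?_
    rw [shiftSeq, h (k + 1) (by omega)]
    congr 1
    omega

/-- The involution of `ℕ` reversing `{0, …, n - 1}`. -/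
def reverseFirst (n k : ℕ) : ℕ := if k < n then n - 1 - k else k

lemma reverseFirst_injective (n : ℕ) : (reverseFirst n).Injective := by
  intro k l h
  unfold reverseFirst at h
  split_ifs at h <;> omega

lemma iSup_mem_xvec_mpRestrict {c : Set (Fin d)} (f : ℕ → Fin d → Fin d → EReal) {n : ℕ}
    (hn : 0 < n) :
    ⨆ i, ⨆ (_ : i ∈ c), xvec (fun m => mpRestrict c (f m)) n i =
      ⨆ i, xvec (fun m => mpRestrict c (f m)) n i := by
  obtain ⟨n, rfl⟩ := Nat.exists_eq_succ_of_ne_zero hn.ne'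
  refine iSup_congr fun i => ?_
  by_cases hi : i ∈ c
  · simp only [hi, iSup_pos]
  · rw [iSup_neg hi, xvec, mpVec_mpRestrict_of_notMem hi]

/-- Convergence in probability to `g` of `n⁻¹` times the largest coordinate of an `n`-fold product
of i.i.d. matrices with law `ν`. As it only concerns the law of each product, the order of the
factors is irrelevant. -/
def HasGrowthRate (ν : Measure (Fin d → Fin d → EReal)) (g : EReal) : Prop :=
  ∀ U : Set EReal, IsOpen U → g ∈ U →
    Tendsto (fun n => seqLaw ν {f | mpScale n (⨆ i, lvec n f i) ∉ U}) atTop (𝓝 0)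

lemma measurable_mpScale_iSup_lvec (n : ℕ) :
    Measurable fun f : ℕ → Fin d → Fin d → EReal => mpScale n (⨆ i, lvec n f i) :=
  (Measurable.iSup (measurable_lvec n)).const_mul _

lemma hasGrowthRate_of_ae_tendsto {Ω : Type*} [MeasurableSpace Ω] {μ : Measure Ω}
    [IsProbabilityMeasure μ] {A : ℕ → Ω → Fin d → Fin d → EReal}
    {ν : Measure (Fin d → Fin d → EReal)} {g : EReal} (hA : ∀ n, Measurable (A n))
    (hind : iIndepFun A μ) (hlaw : ∀ n, μ.map (A n) = ν)
    (hg : ∀ᵐ ω ∂μ, Tendsto (fun n => mpScale n (⨆ i, xvec (fun m => A m ω) n i)) atTop (𝓝 g)) :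
    HasGrowthRate ν g := by
  intro U hU hgU
  have hrev (n : ℕ) : MeasurePreserving (fun ω k => A (reverseFirst n k) ω) μ (seqLaw ν) :=
    measurePreserving_seqLaw hA hind hlaw (reverseFirst_injective n)
  have hxl (n : ℕ) (ω : Ω) :
      xvec (fun m => A m ω) n = lvec n fun k => A (reverseFirst n k) ω :=
    xvec_eq_lvec fun k hk => by simp only [reverseFirst, hk, if_true]
  have hmeas (n : ℕ) :
      MeasurableSet {f : ℕ → Fin d → Fin d → EReal | mpScale n (⨆ i, lvec n f i) ∉ U} :=
    (measurable_mpScale_iSup_lvec n) hU.measurableSet.compl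
  have h := tendsto_measure_of_ae_tendsto_indicator_of_isFiniteMeasure (μ := μ) atTop
    (A := ∅) (As := fun n => {ω | mpScale n (⨆ i, xvec (fun m => A m ω) n i) ∉ U})
    MeasurableSet.empty (fun n => by
      simp only [hxl]
      exact (hrev n).measurable (hmeas n)) (by
      filter_upwards [hg] with ω hω
      filter_upwards [hω.eventually_mem (hU.mem_nhds hgU)] with n hn
      simpa using hn)
  simp only [measure_empty, hxl] at h
  refine h.congr fun n => ?_
  exact (hrev n).measure_preimage (hmeas n).nullMeasurableSet

lemma hasGrowthRate_mpRestrict {Ω : Type*} [MeasurableSpace Ω] {μ : Measure Ω}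
    [IsProbabilityMeasure μ] {A : ℕ → Ω → Fin d → Fin d → EReal}
    {ν : Measure (Fin d → Fin d → EReal)} {g : EReal} (hA : ∀ n, Measurable (A n))
    (hind : iIndepFun A μ) (hlaw : ∀ n, μ.map (A n) = ν) {c : Set (Fin d)}
    (hg : ∀ᵐ ω ∂μ, Tendsto (fun n => mpScale n
      (⨆ i, ⨆ (_ : i ∈ c), xvec (fun m => mpRestrict c (A m ω)) n i)) atTop (𝓝 g)) :
    HasGrowthRate (ν.map (mpRestrict c)) g := by
  have hc := measurable_mpRestrict c
  refine hasGrowthRate_of_ae_tendsto (A := fun n ω => mpRestrict c (A n ω))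
    (fun n => hc.comp (hA n)) (hind.comp _ fun _ => hc) (fun n => ?_) ?_
  · rw [← hlaw n, Measure.map_map hc (hA n)]
    rfl
  · filter_upwards [hg] with ω hω
    refine hω.congr' ?_
    filter_upwards [eventually_gt_atTop 0] with n hn
    rw [iSup_mem_xvec_mpRestrict (fun m => A m ω) hn]

end Reversal

section LowerBound

variable {d : ℕ}

/-- The sequences for which, from some node, every product of length at most `N` has slope greater
than `a`. -/
def noCutSet (a : ℝ) (N : ℕ) : Set (ℕ → Fin d → Fin d → EReal) :=
  {f | ∃ i, ∀ l, 1 ≤ l → l ≤ N → ((a * l : ℝ) : EReal) < lvec l f i}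

lemma measurableSet_noCutSet (a : ℝ) (N : ℕ) : MeasurableSet (noCutSet (d := d) a N) := by
  simp only [noCutSet, Set.ofPred_exists, Set.ofPred_forall]
  exact .iUnion fun i => .iInter fun l => .iInter fun _ => .iInter fun _ =>
    measurableSet_lt measurable_const (measurable_lvec l i)

lemma eventually_notMem_noCutSet {a : ℝ} {f : ℕ → Fin d → Fin d → EReal}
    (hf : ∀ i, f ∉ growthSet i a) : ∀ᶠ N in atTop, f ∉ noCutSet a N := by
  have hcut (i : Fin d) : ∃ l : ℕ, 1 ≤ l ∧ lvec l f i ≤ ((a * l : ℝ) : EReal) := by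
    by_contra! h
    exact hf i (mem_growthSet_of_forall_pos (C := 0) fun l hl => by simpa using (h l hl).le)
  choose l hl hle using hcut
  filter_upwards [eventually_ge_atTop (∑ i, l i)] with N hN
  rintro ⟨i, hi⟩
  have hlN : l i ≤ N := (Finset.single_le_sum_of_canonicallyOrdered (Finset.mem_univ i)).trans hN
  exact (hi (l i) (hl i) hlN).not_ge (hle i)

/-- The price, compared with slope `a`, of following one arc; it is only paid when some node admits
no cut of length at most `N` into a product of slope at most `a`. -/
def cutCost (a : ℝ) (N : ℕ) : (ℕ → Fin d → Fin d → EReal) → ℝ :=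
  (noCutSet a N).indicator fun f => entryBound (f 0) + |a|

lemma cutCost_nonneg (a : ℝ) (N : ℕ) (f : ℕ → Fin d → Fin d → EReal) : 0 ≤ cutCost a N f :=
  Set.indicator_nonneg (fun f _ => add_nonneg (entryBound_nonneg (f 0)) (abs_nonneg a)) f

lemma cutCost_le (a : ℝ) (N : ℕ) (f : ℕ → Fin d → Fin d → EReal) :
    cutCost a N f ≤ entryBound (f 0) + |a| :=
  Set.indicator_le_self' (fun f _ => add_nonneg (entryBound_nonneg (f 0)) (abs_nonneg a)) f

/-- The total price of cutting a product of length `n` greedily into products of slope at most `a`;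
at time `k`, a cut may have length up to `n - k`. -/
def cutError (a : ℝ) (n : ℕ) (f : ℕ → Fin d → Fin d → EReal) : ℝ :=
  ∑ k ∈ Finset.range n, cutCost a (n - k) (shiftSeq k f)

lemma cutError_nonneg (a : ℝ) (n : ℕ) (f : ℕ → Fin d → Fin d → EReal) : 0 ≤ cutError a n f :=
  Finset.sum_nonneg fun _ _ => cutCost_nonneg _ _ _

lemma cutError_shiftSeq_le (a : ℝ) (l m : ℕ) (f : ℕ → Fin d → Fin d → EReal) :
    cutError a m (shiftSeq l f) ≤ cutError a (l + m) f := by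
  unfold cutError
  rw [Finset.sum_range_add]
  refine le_add_of_nonneg_of_le (Finset.sum_nonneg fun _ _ => cutCost_nonneg _ _ _) ?_
  simp only [shiftSeq_shiftSeq, Nat.add_sub_add_left, le_refl]

lemma cutError_succ_of_mem {a : ℝ} {n : ℕ} {f : ℕ → Fin d → Fin d → EReal}
    (hf : f ∈ noCutSet a (n + 1)) :
    cutError a (n + 1) f = cutError a n (shiftSeq 1 f) + (entryBound (f 0) + |a|) := by
  simp only [cutError, Finset.sum_range_succ', shiftSeq_shiftSeq, Nat.add_sub_add_right,
    add_comm 1, shiftSeq_zero, Nat.sub_zero, cutCost, Set.indicator_of_mem hf]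

lemma lvec_le_add_cutError {a : ℝ} {n : ℕ} {f : ℕ → Fin d → Fin d → EReal}
    (hf : ∀ k i j, f k i j ≠ ⊤) (i : Fin d) :
    lvec n f i ≤ ((a * n + cutError a n f : ℝ) : EReal) := by
  induction n using Nat.strong_induction_on generalizing f i with
  | _ n ih =>
  rcases n.eq_zero_or_pos with rfl | hn
  · simp [lvec_zero, cutError]
  by_cases hcut : f ∈ noCutSet a n
  · obtain ⟨n, rfl⟩ := Nat.exists_eq_succ_of_ne_zero hn.ne'
    rw [lvec_succ, mpVec_le_iff]
    intro j
    refine (add_le_add (le_entryBound (hf 0) i j)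
      (ih n n.lt_succ_self (f := shiftSeq 1 f) (fun k => hf (k + 1)) j)).trans ?_
    rw [← EReal.coe_add, EReal.coe_le_coe_iff, cutError_succ_of_mem hcut]
    push_cast
    linarith [neg_abs_le a]
  · simp only [noCutSet, Set.mem_ofPred_eq, not_exists, not_forall, not_lt] at hcut
    obtain ⟨l, hl, hln, hle⟩ := hcut i
    obtain ⟨m, rfl⟩ := Nat.exists_eq_add_of_le hln
    have hshift (j : Fin d) := ih m (by omega) (f := shiftSeq l f) (fun k => hf (k + l)) j
    rw [lvec_add]
    refine (appProd_le_add (R := Set.univ) (w := fun _ => 0) (fun _ _ _ _ _ => Set.mem_univ _)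
      (fun j _ => (hshift j).trans_eq (zero_add _).symm) (Set.mem_univ i)).trans
      ((add_le_add_left hle _).trans ?_)
    rw [← EReal.coe_add, EReal.coe_le_coe_iff]
    push_cast
    linarith [cutError_shiftSeq_le a l m f]

variable {ν : Measure (Fin d → Fin d → EReal)} [IsProbabilityMeasure ν]

lemma integrable_entryBound_eval (hX : Integrable entryBound ν) (k : ℕ) :
    Integrable (fun f : ℕ → Fin d → Fin d → EReal => entryBound (f k)) (seqLaw ν) :=
  (measurePreserving_eval_seqLaw ν k).integrable_comp_of_integrable hX

lemma integrable_cutCost (hX : Integrable entryBound ν) (a : ℝ) (N : ℕ) :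
    Integrable (cutCost a N) (seqLaw ν) :=
  ((integrable_entryBound_eval hX 0).add (integrable_const _)).indicator
    (measurableSet_noCutSet a N)

lemma tendsto_integral_cutCost (hX : Integrable entryBound ν) {a : ℝ}
    (h0 : ∀ i, seqLaw ν (growthSet i a) = 0) :
    Tendsto (fun N => ∫ f, cutCost a N f ∂(seqLaw ν)) atTop (𝓝 0) := by
  have hout : ∀ᵐ f ∂(seqLaw ν), ∀ i, f ∉ growthSet i a :=
    ae_all_iff.2 fun i => measure_eq_zero_iff_ae_notMem.1 (h0 i)
  rw [← integral_zero (ℕ → Fin d → Fin d → EReal) ℝ (μ := seqLaw ν)]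
  refine tendsto_integral_of_dominated_convergence (fun f => entryBound (f 0) + |a|)
    (fun N => (integrable_cutCost hX a N).aestronglyMeasurable)
    ((integrable_entryBound_eval hX 0).add (integrable_const _))
    (fun N => Eventually.of_forall fun f => ?_) ?_
  · rw [Real.norm_of_nonneg (cutCost_nonneg a N f)]
    exact cutCost_le a N f
  · filter_upwards [hout] with f hf
    refine tendsto_const_nhds.congr' ?_
    filter_upwards [eventually_notMem_noCutSet hf] with N hN
    exact (Set.indicator_of_notMem hN _).symm

lemma integrable_cutCost_shiftSeq (hX : Integrable entryBound ν) (a : ℝ) (N k : ℕ) :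
    Integrable (fun f => cutCost a N (shiftSeq k f)) (seqLaw ν) :=
  (measurePreserving_shiftSeq ν k).integrable_comp_of_integrable (integrable_cutCost hX a N)

lemma integral_cutError (hX : Integrable entryBound ν) (a : ℝ) (n : ℕ) :
    ∫ f, cutError a n f ∂(seqLaw ν) =
      ∑ k ∈ Finset.range n, ∫ f, cutCost a (k + 1) f ∂(seqLaw ν) := by
  simp only [cutError]
  rw [integral_finsetSum _ fun k _ => integrable_cutCost_shiftSeq hX a (n - k) k,
    ← Finset.sum_range_reflect]
  refine Finset.sum_congr rfl fun k hk => ?_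
  rw [integral_comp_of_measurePreserving (measurePreserving_shiftSeq ν _)
    (integrable_cutCost hX a _).aestronglyMeasurable]
  have := Finset.mem_range.1 hk
  congr! 3
  omega

lemma tendsto_measure_le_cutError (hX : Integrable entryBound ν) {a : ℝ}
    (h0 : ∀ i, seqLaw ν (growthSet i a) = 0) {ε : ℝ} (hε : 0 < ε) :
    Tendsto (fun n : ℕ => (seqLaw ν).real {f | ε * n ≤ cutError a n f}) atTop (𝓝 0) := by
  have hmean : Tendsto (fun n : ℕ => ε⁻¹ * ((n : ℝ)⁻¹ * ∫ f, cutError a n f ∂(seqLaw ν)))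
      atTop (𝓝 0) := by
    simp only [integral_cutError hX]
    have hcost := (tendsto_add_atTop_iff_nat 1).2 (tendsto_integral_cutCost hX h0)
    simpa using hcost.cesaro.const_mul ε⁻¹
  refine squeeze_zero' (Eventually.of_forall fun n => measureReal_nonneg) ?_ hmean
  filter_upwards [eventually_gt_atTop 0] with n hn
  have hpos : 0 < ε * n := mul_pos hε (by exact_mod_cast hn)
  have hmarkov := mul_meas_ge_le_integral_of_nonneg
    (Eventually.of_forall (cutError_nonneg a n))
    (integrable_finsetSum _ fun k _ => integrable_cutCost_shiftSeq (ν := ν) hX a (n - k) k) (ε * n)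
  rw [← mul_assoc, ← mul_inv]
  exact (le_inv_mul_iff₀ hpos).2 hmarkov

/-- If no node had growth at speed `a`, almost every product could be cut into pieces of slope at
most `a`, with a negligible error. -/
lemma exists_measure_growthSet_ne_zero (htop : ∀ᵐ M ∂ν, ∀ i j, M i j ≠ ⊤)
    (hX : Integrable entryBound ν) {g : EReal} (hg : HasGrowthRate ν g) {a : ℝ}
    (ha : (a : EReal) < g) : ∃ i, seqLaw ν (growthSet i a) ≠ 0 := by
  by_contra! h0
  obtain ⟨b, hab, hbg⟩ := EReal.lt_iff_exists_real_btwn.1 ha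
  have hab' : a < b := EReal.coe_lt_coe_iff.1 hab
  have hslow := (ENNReal.tendsto_toReal ENNReal.zero_ne_top).comp (hg _ isOpen_Ioi hbg)
  have hsum := hslow.add (tendsto_measure_le_cutError hX h0 (sub_pos.2 hab'))
  have hone : ∀ᶠ n : ℕ in atTop,
      1 ≤ (seqLaw ν).real {f | mpScale n (⨆ i, lvec n f i) ∉ Set.Ioi (b : EReal)} +
        (seqLaw ν).real {f | (b - a) * n ≤ cutError a n f} := by
    filter_upwards [eventually_gt_atTop 0] with n hn
    refine le_trans ?_ (measureReal_union_le _ _)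
    rw [← probReal_univ (μ := seqLaw ν)]
    refine ENNReal.toReal_mono (measure_ne_top _ _) (measure_mono_ae ?_)
    filter_upwards [ae_seqLaw_forall htop] with f hf _
    by_cases hfast : (b : EReal) < mpScale n (⨆ i, lvec n f i)
    · obtain ⟨i, hi⟩ := lt_iSup_iff.1 ((lt_mpScale_iff hn).1 hfast)
      have := EReal.coe_lt_coe_iff.1 (hi.trans_le (lvec_le_add_cutError (a := a) hf i))
      refine Or.inr (show (b - a) * n ≤ cutError a n f by linarith)
    · exact Or.inl hfast
  have := ge_of_tendsto hsum hone
  norm_num at this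

lemma exists_mem_measure_growthSet_ne_zero (htop : ∀ᵐ M ∂ν, ∀ i j, M i j ≠ ⊤)
    (hX : Integrable entryBound ν) {c : Set (Fin d)} {g : EReal}
    (hg : HasGrowthRate (ν.map (mpRestrict c)) g) {a : ℝ} (ha : (a : EReal) < g) :
    ∃ i ∈ c, seqLaw ν (growthSet i a) ≠ 0 := by
  have : IsProbabilityMeasure (ν.map (mpRestrict c)) :=
    Measure.isProbabilityMeasure_map (measurable_mpRestrict c).aemeasurable
  obtain ⟨i, hi⟩ := exists_measure_growthSet_ne_zero (ae_ne_top_map_mpRestrict htop c)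
    (integrable_entryBound_map_mpRestrict htop hX c) hg ha
  rw [← (measurePreserving_restrictSeq c).measure_preimage
    (measurableSet_growthSet i a).nullMeasurableSet] at hi
  refine ⟨i, ?_, fun h0 => hi (measure_mono_null (fun f => mem_growthSet_of_restrictSeq_mem) h0)⟩
  by_contra hic
  exact hi (measure_mono_null (fun f hf => restrictSeq_notMem_growthSet hic a f hf) measure_empty)

end LowerBound

section Graph

variable {d : ℕ}

/-- The strongly connected component of `i`. -/
def sccOf (r : Fin d → Fin d → Prop) (i : Fin d) : Set (Fin d) :=
  {j | Relation.ReflTransGen r i j ∧ Relation.ReflTransGen r j i}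

/-- The number of nodes reachable from `i`, a height function on the components of the graph. -/
def reachCard (r : Fin d → Fin d → Prop) (i : Fin d) : ℕ :=
  Set.ncard {j | Relation.ReflTransGen r i j}

lemma isSCC_sccOf (r : Fin d → Fin d → Prop) (i : Fin d) : IsSCC r (sccOf r i) := ⟨i, rfl⟩

lemma mem_sccOf_self (r : Fin d → Fin d → Prop) (i : Fin d) : i ∈ sccOf r i := ⟨.refl, .refl⟩

lemma reachCard_le (r : Fin d → Fin d → Prop) (i : Fin d) : reachCard r i ≤ d := by
  simpa [reachCard] using Set.ncard_le_card {j | Relation.ReflTransGen r i j}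

lemma reachCard_le_of_reach {r : Fin d → Fin d → Prop} {i j : Fin d}
    (h : Relation.ReflTransGen r i j) : reachCard r j ≤ reachCard r i :=
  Set.ncard_le_ncard (fun _ hk => h.trans hk) (Set.toFinite _)

lemma reachCard_lt {r : Fin d → Fin d → Prop} {i j : Fin d}
    (h : Relation.ReflTransGen r i j) (h' : ¬ Relation.ReflTransGen r j i) :
    reachCard r j < reachCard r i :=
  Set.ncard_lt_ncard ⟨fun _ hk => h.trans hk, fun hs => h' (hs Relation.ReflTransGen.refl)⟩
    (Set.toFinite _)

variable {r : Fin d → Fin d → Prop} {γ : Set (Fin d) → EReal}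

lemma isSCC_and_nodeReach_iff {i : Fin d} {c : Set (Fin d)} :
    IsSCC r c ∧ nodeReach r i c ↔ ∃ j, Relation.ReflTransGen r i j ∧ c = sccOf r j := by
  constructor
  · rintro ⟨⟨j, rfl⟩, k, hk, hik⟩
    exact ⟨j, hik.trans hk.2, rfl⟩
  · rintro ⟨j, hij, rfl⟩
    exact ⟨isSCC_sccOf r j, j, mem_sccOf_self r j, hij⟩

lemma sccReach_sccOf_iff {i : Fin d} {c : Set (Fin d)} :
    sccReach r (sccOf r i) c ↔ nodeReach r i c := by
  constructor
  · rintro ⟨k, hk, j, hj, hkj⟩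
    exact ⟨j, hj, hk.1.trans hkj⟩
  · exact fun h => ⟨i, mem_sccOf_self r i, h⟩

lemma gammaBrack_sccOf (i : Fin d) : gammaBrack r γ (sccOf r i) = limFormula r γ i := by
  simp only [gammaBrack, limFormula, sccReach_sccOf_iff]

lemma le_limFormula {i j : Fin d} (hij : Relation.ReflTransGen r i j) :
    γ (sccOf r j) ≤ limFormula r γ i :=
  le_iSup₂_of_le (sccOf r j) (isSCC_and_nodeReach_iff.2 ⟨j, hij, rfl⟩) le_rfl

lemma exists_eq_limFormula (r : Fin d → Fin d → Prop) (γ : Set (Fin d) → EReal) (i : Fin d) :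
    ∃ j, Relation.ReflTransGen r i j ∧ γ (sccOf r j) = limFormula r γ i := by
  obtain ⟨j, hj, hmax⟩ := (Set.toFinite {j | Relation.ReflTransGen r i j}).exists_maximalFor
    (fun j => γ (sccOf r j)) _ ⟨i, .refl⟩
  refine ⟨j, hj, le_antisymm (le_limFormula hj) (iSup₂_le fun c hc => ?_)⟩
  obtain ⟨k, hik, rfl⟩ := isSCC_and_nodeReach_iff.1 hc
  rcases le_total (γ (sccOf r j)) (γ (sccOf r k)) with h | h
  · exact hmax hik h
  · exact h

lemma limFormula_le_of_reach {i j : Fin d} (hij : Relation.ReflTransGen r i j) :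
    limFormula r γ j ≤ limFormula r γ i := by
  obtain ⟨k, hjk, hk⟩ := exists_eq_limFormula r γ j
  exact hk ▸ le_limFormula (hij.trans hjk)

lemma mem_Hset_sccOf_iff {o i : Fin d} : i ∈ Hset r γ (sccOf r o) ↔
    Relation.ReflTransGen r o i ∧ limFormula r γ i = limFormula r γ o := by
  simp only [Hset, Set.mem_ofPred_eq, gammaBrack_sccOf]
  constructor
  · rintro ⟨c, hc, ⟨k, hk, hki⟩, hic, hγ⟩
    obtain ⟨j, hij, rfl⟩ := isSCC_and_nodeReach_iff.1 ⟨hc, hic⟩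
    have hoi := hk.1.trans hki
    exact ⟨hoi, le_antisymm (limFormula_le_of_reach hoi) (hγ ▸ le_limFormula hij)⟩
  · rintro ⟨hoi, h⟩
    obtain ⟨j, hij, hj⟩ := exists_eq_limFormula r γ i
    exact ⟨sccOf r j, isSCC_sccOf r j, ⟨o, mem_sccOf_self r o, hoi⟩,
      ⟨j, mem_sccOf_self r j, hij⟩, hj.trans h⟩

end Graph

section UpperBound

variable {d : ℕ}

/-- The sequences whose first `N` matrices have a product of slope greater than `m` inside some
component reachable from `o`. -/
def exceedSet (r : Fin d → Fin d → Prop) (o : Fin d) (m : ℝ) (N : ℕ) :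
    Set (ℕ → Fin d → Fin d → EReal) :=
  {f | ∃ i, Relation.ReflTransGen r o i ∧
    (m : EReal) < mpScale N (⨆ j, lvec N (restrictSeq (sccOf r i) f) j)}

/-- A bound for the growth over a block of `N` matrices: slope `m` if no component exceeds it, plus
the sum of the entry bounds otherwise. The latter is split at level `T`, so that its mean is small
when `exceedSet r o m N` has small probability. -/
def blockCost (r : Fin d → Fin d → Prop) (o : Fin d) (m T : ℝ) (N : ℕ)
    (f : ℕ → Fin d → Fin d → EReal) : ℝ :=
  m * N + ((exceedSet r o m N).indicator (fun _ => (|m| + T) * N) f +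
    ∑ k ∈ Finset.range N, (entryBound (f k) - T)⁺)

lemma sum_entryBound_le (T : ℝ) (N : ℕ) (f : ℕ → Fin d → Fin d → EReal) :
    ∑ k ∈ Finset.range N, entryBound (f k) ≤
      T * N + ∑ k ∈ Finset.range N, (entryBound (f k) - T)⁺ := by
  calc ∑ k ∈ Finset.range N, entryBound (f k)
      ≤ ∑ k ∈ Finset.range N, (T + (entryBound (f k) - T)⁺) :=
        Finset.sum_le_sum fun k _ => by linarith [le_posPart (entryBound (f k) - T)]
    _ = _ := by
        rw [Finset.sum_add_distrib, Finset.sum_const, Finset.card_range, nsmul_eq_mul, mul_comm]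

lemma sum_entryBound_sub_le_blockCost (r : Fin d → Fin d → Prop) (o : Fin d) (m : ℝ) {T : ℝ}
    (hT : 0 ≤ T) (N : ℕ) (f : ℕ → Fin d → Fin d → EReal) :
    ∑ k ∈ Finset.range N, entryBound (f k) - (|m| + T) * N ≤ blockCost r o m T N f := by
  have hind : 0 ≤ (exceedSet r o m N).indicator (fun _ => (|m| + T) * N) f :=
    Set.indicator_nonneg (fun _ _ => by positivity) f
  have hm : -(|m| * N) ≤ m * N := by
    rw [← neg_mul]
    exact mul_le_mul_of_nonneg_right (neg_abs_le m) N.cast_nonneg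
  unfold blockCost
  linarith [sum_entryBound_le T N f]

lemma lvec_restrictSeq_le_blockCost {r : Fin d → Fin d → Prop} {o i : Fin d}
    (hi : Relation.ReflTransGen r o i) (m T : ℝ) {N : ℕ} (hN : 0 < N)
    {f : ℕ → Fin d → Fin d → EReal} (hf : ∀ k i j, f k i j ≠ ⊤) :
    lvec N (restrictSeq (sccOf r i) f) i ≤ (blockCost r o m T N f : EReal) := by
  have hsum : 0 ≤ ∑ k ∈ Finset.range N, (entryBound (f k) - T)⁺ :=
    Finset.sum_nonneg fun _ _ => posPart_nonneg _
  by_cases hB : f ∈ exceedSet r o m N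
  · refine (lvec_restrictSeq_le _ N f i).trans ((lvec_le_sum_entryBound hf N i).trans ?_)
    have hm : 0 ≤ (m + |m|) * N :=
      mul_nonneg (by linarith [neg_abs_le m]) N.cast_nonneg
    rw [EReal.coe_le_coe_iff, blockCost, Set.indicator_of_mem hB]
    linarith [sum_entryBound_le T N f]
  · have hslow := mt (fun h => ⟨i, hi, h⟩) hB
    rw [lt_mpScale_iff hN, not_lt] at hslow
    refine (le_iSup _ i).trans (hslow.trans ?_)
    rw [EReal.coe_le_coe_iff, blockCost, Set.indicator_of_notMem hB]
    linarith

/-- The potential `reachCard` absorbs the cost of the single block in which a path changes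
component. -/
lemma appProd_reachCard_le {r : Fin d → Fin d → Prop} {o i : Fin d}
    (hi : Relation.ReflTransGen r o i) (m : ℝ) {T : ℝ} (hT : 0 ≤ T) {N : ℕ} (hN : 0 < N)
    {f : ℕ → Fin d → Fin d → EReal} (hf : ∀ k i j, f k i j ≠ ⊤)
    (hr : ∀ k i j, f k i j ≠ ⊥ → r i j) :
    appProd N f (fun j => (((|m| + T) * N * reachCard r j : ℝ) : EReal)) i ≤
      (((|m| + T) * N * reachCard r i : ℝ) : EReal) + (blockCost r o m T N f : EReal) := by
  have hQ : 0 ≤ (|m| + T) * N := by positivity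
  have hlower : ∀ j ∈ {j | Relation.ReflTransGen r i j ∧ ¬ Relation.ReflTransGen r j i},
      (((|m| + T) * N * reachCard r j : ℝ) : EReal) ≤
        ((((|m| + T) * N * (reachCard r i - 1) : ℝ)) : EReal) := by
    rintro j ⟨hij, hji⟩
    have : (reachCard r j : ℝ) + 1 ≤ reachCard r i := by exact_mod_cast reachCard_lt hij hji
    exact EReal.coe_le_coe_iff.2 (mul_le_mul_of_nonneg_left (by linarith) hQ)
  refine (appProd_le_max (c := sccOf r i) (s := (|m| + T) * N * reachCard r i) hf ?_ ?_
    (fun j hj => EReal.coe_le_coe_iff.2 ?_) hlower (mem_sccOf_self r i)).trans (max_le ?_ ?_)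
  · intro k j hj l hjl
    have hil := hj.1.tail (hr k j l hjl)
    exact (em (Relation.ReflTransGen r l i)).imp (⟨hil, ·⟩) (⟨hil, ·⟩)
  · rintro k j ⟨hij, hji⟩ l hjl
    have hstep := hr k j l hjl
    exact ⟨hij.tail hstep, fun hli => hji (.head hstep hli)⟩
  · exact mul_le_mul_of_nonneg_left (by exact_mod_cast reachCard_le_of_reach hj.1) hQ
  · rw [add_comm]
    gcongr
    exact lvec_restrictSeq_le_blockCost hi m T hN hf
  · rw [← EReal.coe_add, EReal.coe_le_coe_iff]
    linarith [sum_entryBound_sub_le_blockCost r o m hT N f]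

lemma lvec_add_mul_le {r : Fin d → Fin d → Prop} (o : Fin d) (m : ℝ) {T : ℝ} (hT : 0 ≤ T)
    {N : ℕ} (hN : 0 < N) {f : ℕ → Fin d → Fin d → EReal} (hf : ∀ k i j, f k i j ≠ ⊤)
    (hr : ∀ k i j, f k i j ≠ ⊥ → r i j) (t n : ℕ) :
    lvec (t + n * N) f o ≤ ((∑ k ∈ Finset.range t, entryBound (f k) + ((|m| + T) * N * d +
      ∑ k ∈ Finset.range n, blockCost r o m T N (shiftSeq (k * N) (shiftSeq t f))) : ℝ) :
        EReal) := by
  have hreach {g : ℕ → Fin d → Fin d → EReal} (hg : ∀ k i j, g k i j ≠ ⊥ → r i j) (k : ℕ) :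
      ∀ i ∈ {i | Relation.ReflTransGen r o i}, ∀ j, g k i j ≠ ⊥ →
        j ∈ {i | Relation.ReflTransGen r o i} := fun i hi j hij => hi.tail (hg k i j hij)
  rw [lvec_add]
  refine appProd_le_sum_entryBound hf (hreach hr) (fun i hi => ?_) .refl
  have hpot : ∀ j, (0 : EReal) ≤ (((|m| + T) * N * reachCard r j : ℝ) : EReal) := fun j => by
    exact_mod_cast (by positivity)
  have hblocks := appProd_mul_le (f := shiftSeq t f)
    (D := fun k => blockCost r o m T N (shiftSeq (k * N) (shiftSeq t f)))
    (hreach fun k => hr (k + t))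
    (fun k i hi => appProd_reachCard_le hi m hT hN (fun l => hf (l + k * N + t))
      fun l => hr (l + k * N + t)) n hi
  refine (appProd_mono (fun _ _ _ => le_rfl) hpot i).trans (hblocks.trans ?_)
  rw [← EReal.coe_add, EReal.coe_le_coe_iff]
  gcongr
  exact reachCard_le r i

lemma tendsto_integral_posPart_sub {α : Type*} [MeasurableSpace α] {ν : Measure α} {X : α → ℝ}
    (hX : Integrable X ν) : Tendsto (fun T : ℕ => ∫ x, (X x - T)⁺ ∂ν) atTop (𝓝 0) := by
  rw [← integral_zero α ℝ (μ := ν)]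
  refine tendsto_integral_of_dominated_convergence (fun x => |X x|)
    (fun T => (hX.aestronglyMeasurable.sub aestronglyMeasurable_const).sup
      aestronglyMeasurable_const) hX.abs
    (fun T => Eventually.of_forall fun x => ?_) (Eventually.of_forall fun x => ?_)
  · rw [Real.norm_of_nonneg (posPart_nonneg _)]
    exact sup_le (by linarith [le_abs_self (X x), T.cast_nonneg (α := ℝ)]) (abs_nonneg _)
  · refine tendsto_const_nhds.congr' ?_
    filter_upwards [tendsto_natCast_atTop_atTop.eventually_ge_atTop (X x)] with T hT
    exact (posPart_eq_zero.2 (sub_nonpos.2 hT)).symm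

variable {ν : Measure (Fin d → Fin d → EReal)} [IsProbabilityMeasure ν]

lemma measurable_mpScale_iSup_lvec_restrictSeq (c : Set (Fin d)) (N : ℕ) :
    Measurable fun f => mpScale N (⨆ j, lvec N (restrictSeq c f) j) :=
  (measurable_mpScale_iSup_lvec N).comp
    (measurable_pi_iff.2 fun k => (measurable_mpRestrict c).comp (measurable_pi_apply k))

lemma measurableSet_exceedSet (r : Fin d → Fin d → Prop) (o : Fin d) (m : ℝ) (N : ℕ) :
    MeasurableSet (exceedSet r o m N) := by
  simp only [exceedSet, Set.ofPred_exists, Set.ofPred_and]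
  exact .iUnion fun i => (MeasurableSet.const _).inter
    (measurableSet_lt measurable_const (measurable_mpScale_iSup_lvec_restrictSeq _ N))

lemma measurable_blockCost (r : Fin d → Fin d → Prop) (o : Fin d) (m T : ℝ) (N : ℕ) :
    Measurable (blockCost r o m T N) :=
  ((measurable_const.indicator (measurableSet_exceedSet r o m N)).add
    (Finset.measurable_sum _ fun k _ =>
      ((measurable_entryBound.comp (measurable_pi_apply k)).sub_const T).sup_const 0)).const_add _

lemma dependsOn_blockCost (r : Fin d → Fin d → Prop) (o : Fin d) (m T : ℝ) (N : ℕ) :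
    DependsOn (blockCost (d := d) r o m T N) (Set.Iio N) := by
  intro f g hfg
  have hexceed : f ∈ exceedSet r o m N ↔ g ∈ exceedSet r o m N := by
    have hl (c : Set (Fin d)) : lvec N (restrictSeq c f) = lvec N (restrictSeq c g) :=
      dependsOn_appProd N _ fun k hk => congrArg (mpRestrict c) (hfg k hk)
    simp only [exceedSet, Set.mem_ofPred_eq, hl]
  have hsum : ∑ k ∈ Finset.range N, (entryBound (f k) - T)⁺ =
      ∑ k ∈ Finset.range N, (entryBound (g k) - T)⁺ :=
    Finset.sum_congr rfl fun k hk => by rw [hfg k (Finset.mem_range.1 hk)]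
  classical
  simp only [blockCost, Set.indicator_apply, hexceed, hsum]

lemma integrable_posPart_entryBound_sub (hX : Integrable entryBound ν) (T : ℝ) (k : ℕ) :
    Integrable (fun f : ℕ → Fin d → Fin d → EReal => (entryBound (f k) - T)⁺) (seqLaw ν) :=
  ((integrable_entryBound_eval hX k).sub (integrable_const T)).pos_part

lemma integrable_indicator_exceedSet (r : Fin d → Fin d → Prop) (o : Fin d) (m T : ℝ) (N : ℕ) :
    Integrable ((exceedSet r o m N).indicator fun _ => (|m| + T) * N) (seqLaw ν) :=
  (integrable_const _).indicator (measurableSet_exceedSet r o m N)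

lemma integrable_blockCost (hX : Integrable entryBound ν) (r : Fin d → Fin d → Prop) (o : Fin d)
    (m T : ℝ) (N : ℕ) : Integrable (blockCost r o m T N) (seqLaw ν) :=
  (integrable_const _).add ((integrable_indicator_exceedSet r o m T N).add
    (integrable_finsetSum _ fun k _ => integrable_posPart_entryBound_sub hX T k))

lemma integral_blockCost (hX : Integrable entryBound ν) (r : Fin d → Fin d → Prop) (o : Fin d)
    (m T : ℝ) (N : ℕ) :
    ∫ f, blockCost r o m T N f ∂(seqLaw ν) =
      (m + ((|m| + T) * (seqLaw ν).real (exceedSet r o m N) + ∫ M, (entryBound M - T)⁺ ∂ν)) *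
        N := by
  have hsum := integrable_finsetSum (Finset.range N)
    fun k _ => integrable_posPart_entryBound_sub (ν := ν) hX T k
  have heval (k : ℕ) : ∫ f : ℕ → Fin d → Fin d → EReal, (entryBound (f k) - T)⁺ ∂(seqLaw ν) =
      ∫ M, (entryBound M - T)⁺ ∂ν :=
    integral_comp_of_measurePreserving (measurePreserving_eval_seqLaw ν k)
      (Φ := fun M => (entryBound M - T)⁺)
      ((measurable_entryBound.sub_const T).sup_const 0).aestronglyMeasurable
  have hB := integrable_indicator_exceedSet (ν := ν) r o m T N
  unfold blockCost
  rw [integral_add (integrable_const _) (hB.fun_add hsum), integral_add hB hsum,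
    integral_indicator_const _ (measurableSet_exceedSet r o m N),
    integral_finsetSum _ fun k _ => integrable_posPart_entryBound_sub hX T k]
  simp only [heval, integral_const, probReal_univ, Finset.sum_const, Finset.card_range,
    nsmul_eq_mul, smul_eq_mul]
  ring

/-- `γ` assigns to every strongly connected component of `r` the growth rate of the corresponding
diagonal block of an i.i.d. sequence with law `ν`. -/
def HasComponentGrowthRates (r : Fin d → Fin d → Prop) (ν : Measure (Fin d → Fin d → EReal))
    (γ : Set (Fin d) → EReal) : Prop :=
  ∀ c, IsSCC r c → HasGrowthRate (ν.map (mpRestrict c)) (γ c)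

lemma tendsto_measure_exceedSet {r : Fin d → Fin d → Prop} {γ : Set (Fin d) → EReal}
    (hγ : HasComponentGrowthRates r ν γ) {o : Fin d} {m : ℝ} (hm : limFormula r γ o < m) :
    Tendsto (fun n => (seqLaw ν).real (exceedSet r o m n)) atTop (𝓝 0) := by
  have hcomp (i : Fin d) (hi : Relation.ReflTransGen r o i) : Tendsto (fun n => seqLaw ν
      {f | (m : EReal) < mpScale n (⨆ j, lvec n (restrictSeq (sccOf r i) f) j)}) atTop (𝓝 0) := by
    have hslow := hγ _ (isSCC_sccOf r i) _ isOpen_Iio ((le_limFormula hi).trans_lt hm)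
    refine tendsto_of_tendsto_of_tendsto_of_le_of_le tendsto_const_nhds hslow
      (fun _ => zero_le) fun n => ?_
    have hmeas : MeasurableSet
        {f : ℕ → Fin d → Fin d → EReal | mpScale n (⨆ j, lvec n f j) ∉ Set.Iio (m : EReal)} :=
      (measurable_mpScale_iSup_lvec n) measurableSet_Iio.compl
    rw [← (measurePreserving_restrictSeq (sccOf r i)).measure_preimage hmeas.nullMeasurableSet]
    exact measure_mono fun f (hf : (m : EReal) < _) => hf.not_gt
  have hsum := tendsto_finsetSum
    ({i | Relation.ReflTransGen r o i} : Set (Fin d)).toFinite.toFinset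
    fun i hi => hcomp i (by simpa using hi)
  rw [Finset.sum_const_zero] at hsum
  refine (ENNReal.tendsto_toReal ENNReal.zero_ne_top).comp
    (tendsto_of_tendsto_of_tendsto_of_le_of_le tendsto_const_nhds hsum (fun _ => zero_le)
      fun n => ?_)
  refine (measure_mono ?_).trans (measure_biUnion_finset_le _ _)
  rintro f ⟨i, hi, hf⟩
  exact Set.mem_biUnion (by simpa using hi) hf

lemma exists_integral_blockCost_lt (hX : Integrable entryBound ν) {r : Fin d → Fin d → Prop}
    {γ : Set (Fin d) → EReal} (hγ : HasComponentGrowthRates r ν γ) {o : Fin d} {m b : ℝ}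
    (hm : limFormula r γ o < m) (hb : m < b) :
    ∃ T : ℕ, ∃ N : ℕ, 0 < N ∧ ∫ f, blockCost r o m T N f ∂(seqLaw ν) < b * N := by
  obtain ⟨T, hT⟩ := ((tendsto_integral_posPart_sub hX).eventually_lt_const (sub_pos.2 hb)).exists
  have hlim := ((tendsto_measure_exceedSet hγ hm).const_mul (|m| + T)).add_const
    (∫ M, (entryBound M - T)⁺ ∂ν)
  rw [mul_zero, zero_add] at hlim
  obtain ⟨N, hN0, hN⟩ := ((eventually_gt_atTop 0).and (hlim.eventually_lt_const hT)).exists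
  refine ⟨T, N, hN0, ?_⟩
  rw [integral_blockCost hX]
  exact mul_lt_mul_of_pos_right (by linarith) (by exact_mod_cast hN0)

lemma eventually_lvec_add_mul_le {r : Fin d → Fin d → Prop} {o : Fin d} {m b c : ℝ} {T N t : ℕ}
    (hN : 0 < N) {f : ℕ → Fin d → Fin d → EReal} (hf : ∀ k i j, f k i j ≠ ⊤)
    (hr : ∀ k i j, f k i j ≠ ⊥ → r i j) (hc : c < b * N)
    (havg : Tendsto (fun n : ℕ => (∑ k ∈ Finset.range n,
      blockCost r o m T N (shiftSeq (k * N) (shiftSeq t f))) / n) atTop (𝓝 c)) :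
    ∀ᶠ n : ℕ in atTop, lvec (t + n * N) f o ≤ ((b * (t + n * N : ℕ) : ℝ) : EReal) := by
  set C : ℝ := ∑ k ∈ Finset.range t, entryBound (f k) + (|m| + T) * N * d
  have hlim := havg.add
    ((tendsto_const_nhds (x := C - b * t)).div_atTop tendsto_natCast_atTop_atTop)
  rw [add_zero] at hlim
  filter_upwards [hlim.eventually_lt_const hc, eventually_gt_atTop 0] with n hn hn0
  refine (lvec_add_mul_le o m T.cast_nonneg hN hf hr t n).trans (EReal.coe_le_coe_iff.2 ?_)
  rw [← add_div, div_lt_iff₀ (by exact_mod_cast hn0)] at hn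
  push_cast
  linarith

lemma ae_eventually_lvec_le (htop : ∀ᵐ M ∂ν, ∀ i j, M i j ≠ ⊤) (hX : Integrable entryBound ν)
    {γ : Set (Fin d) → EReal} (hγ : HasComponentGrowthRates (arcRel ν id) ν γ) {o : Fin d} {b : ℝ}
    (hb : limFormula (arcRel ν id) γ o < b) :
    ∀ᵐ f ∂(seqLaw ν), ∀ᶠ n : ℕ in atTop, lvec n f o ≤ ((b * n : ℝ) : EReal) := by
  obtain ⟨m, hm, hmb⟩ := EReal.lt_iff_exists_real_btwn.1 hb
  obtain ⟨T, N, hN, hlt⟩ := exists_integral_blockCost_lt hX hγ hm (EReal.coe_lt_coe_iff.1 hmb)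
  have havg := tendsto_blockAverage hN (measurable_blockCost (arcRel ν id) o m T N)
    (integrable_blockCost hX _ o m T N) (dependsOn_blockCost _ o m T N)
  have havg_shift : ∀ᵐ f ∂(seqLaw ν), ∀ t, Tendsto (fun n : ℕ => (∑ k ∈ Finset.range n,
      blockCost (arcRel ν id) o m T N (shiftSeq (k * N) (shiftSeq t f))) / n) atTop
        (𝓝 (∫ f, blockCost (arcRel ν id) o m T N f ∂(seqLaw ν))) :=
    ae_all_iff.2 fun t => (measurePreserving_shiftSeq ν t).quasiMeasurePreserving.ae havg
  filter_upwards [ae_seqLaw_forall htop, ae_seqLaw_forall (ae_arcRel ν id), havg_shift]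
    with f hf hr hav
  have hresidues : ∀ᶠ n : ℕ in atTop, ∀ t ∈ Finset.range N,
      lvec (t + n * N) f o ≤ ((b * (t + n * N : ℕ) : ℝ) : EReal) :=
    (Finset.eventually_all _).2 fun t _ => eventually_lvec_add_mul_le hN hf hr hlt (hav t)
  filter_upwards [(Nat.tendsto_div_const_atTop hN.ne').eventually hresidues] with n hn
  have := hn (n % N) (Finset.mem_range.2 (n.mod_lt hN))
  rwa [Nat.mod_add_div'] at this

end UpperBound

section Determinism

variable {d : ℕ}

lemma mpScale_le_iff {n : ℕ} (hn : 0 < n) {y : EReal} {b : ℝ} :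
    mpScale n y ≤ b ↔ y ≤ ((b * n : ℝ) : EReal) := by
  rw [← not_lt, lt_mpScale_iff hn, not_lt]

lemma le_of_tendsto_consSeq {M : Fin d → Fin d → EReal} (hM : ∀ i j, M i j ≠ ⊤)
    {f : ℕ → Fin d → Fin d → EReal} {i : Fin d} {b : ℝ}
    (hf : ∀ j, M i j ≠ ⊥ → ∀ᶠ n : ℕ in atTop, lvec n f j ≤ ((b * n : ℝ) : EReal)) {L : EReal}
    (hL : Tendsto (fun n => mpScale n (lvec n (consSeq M f) i)) atTop (𝓝 L)) : L ≤ b := by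
  refine EReal.le_of_forall_lt_iff_le.1 fun c hbc => ?_
  have hgap : Tendsto (fun n : ℕ => (c - b) * n) atTop atTop :=
    tendsto_natCast_atTop_atTop.const_mul_atTop (sub_pos.2 (EReal.coe_lt_coe_iff.1 hbc))
  refine le_of_tendsto ((tendsto_add_atTop_iff_nat 1).2 hL) ?_
  filter_upwards [hgap.eventually_ge_atTop (entryBound M - c),
    eventually_all.2 fun j => eventually_imp_distrib_left.2 (hf j)] with n hn hnf
  rw [mpScale_le_iff n.succ_pos, lvec_succ_consSeq, mpVec_le_iff]
  intro j
  by_cases hj : M i j = ⊥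
  · simp only [hj, EReal.bot_add, bot_le]
  · refine (add_le_add (le_entryBound hM i j) (hnf j hj)).trans ?_
    rw [← EReal.coe_add, EReal.coe_le_coe_iff]
    push_cast
    linarith

variable {ν : Measure (Fin d → Fin d → EReal)} [IsProbabilityMeasure ν] {γ : Set (Fin d) → EReal}

lemma ae_forall_eventually_lvec_le (htop : ∀ᵐ M ∂ν, ∀ i j, M i j ≠ ⊤)
    (hX : Integrable entryBound ν) (hγ : HasComponentGrowthRates (arcRel ν id) ν γ) (i : Fin d) :
    ∀ᵐ f ∂(seqLaw ν), ∀ b : ℝ, limFormula (arcRel ν id) γ i < b →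
      ∀ᶠ n : ℕ in atTop, lvec n f i ≤ ((b * n : ℝ) : EReal) := by
  have hrat : ∀ᵐ f ∂(seqLaw ν), ∀ q : ℚ, limFormula (arcRel ν id) γ i < ((q : ℝ) : EReal) →
      ∀ᶠ n : ℕ in atTop, lvec n f i ≤ ((q * n : ℝ) : EReal) :=
    ae_all_iff.2 fun q => eventually_imp_distrib_left.2 (ae_eventually_lvec_le htop hX hγ)
  filter_upwards [hrat] with f hf b hb
  obtain ⟨q, hq, hqb⟩ := EReal.lt_iff_exists_rat_btwn.1 hb
  filter_upwards [hf q hq] with n hn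
  refine hn.trans (EReal.coe_le_coe_iff.2 ?_)
  exact mul_le_mul_of_nonneg_right (EReal.coe_lt_coe_iff.1 hqb).le n.cast_nonneg

lemma measure_growthSet_ne_zero_of_lt_limFormula (htop : ∀ᵐ M ∂ν, ∀ i j, M i j ≠ ⊤)
    (hX : Integrable entryBound ν) (hγ : HasComponentGrowthRates (arcRel ν id) ν γ) {i : Fin d}
    {a : ℝ} (ha : (a : EReal) < limFormula (arcRel ν id) γ i) : seqLaw ν (growthSet i a) ≠ 0 := by
  obtain ⟨j, hij, hj⟩ := exists_eq_limFormula (arcRel ν id) γ i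
  obtain ⟨k, hk, hpos⟩ :=
    exists_mem_measure_growthSet_ne_zero htop hX (hγ _ (isSCC_sccOf _ j)) (hj ▸ ha)
  exact measure_growthSet_ne_zero_of_reach (hij.trans hk.1) hpos

lemma ae_tendsto_limFormula (htop : ∀ᵐ M ∂ν, ∀ i j, M i j ≠ ⊤) (hX : Integrable entryBound ν)
    (hγ : HasComponentGrowthRates (arcRel ν id) ν γ) {i : Fin d}
    (hH : ∀ᵐ M ∂ν, ∀ k ∈ Hset (arcRel ν id) γ (sccOf (arcRel ν id) i),
      ∃ j ∈ Hset (arcRel ν id) γ (sccOf (arcRel ν id) i), M k j ≠ ⊥) :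
    ∀ᵐ f ∂(seqLaw ν), Tendsto (fun n => mpScale n (lvec n f i)) atTop
      (𝓝 (limFormula (arcRel ν id) γ i)) := by
  have hlower : ∀ᵐ f ∂(seqLaw ν), ∀ q : ℚ, ((q : ℝ) : EReal) < limFormula (arcRel ν id) γ i →
      f ∈ growthSet i q :=
    ae_all_iff.2 fun q => eventually_imp_distrib_left.2 fun hq =>
      ae_mem_growthSet hH (fun j hj => measure_growthSet_ne_zero_of_lt_limFormula htop hX hγ
        (by rwa [(mem_Hset_sccOf_iff.1 hj).2])) (mem_Hset_sccOf_iff.2 ⟨.refl, rfl⟩)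
  filter_upwards [hlower, ae_forall_eventually_lvec_le htop hX hγ i] with f hl hu
  refine tendsto_order.2 ⟨fun a ha => ?_, fun b hb => ?_⟩
  · obtain ⟨p, hap, hp⟩ := EReal.lt_iff_exists_real_btwn.1 ha
    obtain ⟨q, hpq, hq⟩ := EReal.lt_iff_exists_rat_btwn.1 hp
    exact (eventually_lt_mpScale_of_mem_growthSet (hl q hq)
      (EReal.coe_lt_coe_iff.1 hpq)).mono fun n => hap.trans
  · obtain ⟨q, hq, hqb⟩ := EReal.lt_iff_exists_real_btwn.1 hb
    filter_upwards [hu q hq, eventually_gt_atTop 0] with n hn hn0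
      using ((mpScale_le_iff hn0).2 hn).trans_lt hqb

lemma limFormula_le_of_ae_tendsto (htop : ∀ᵐ M ∂ν, ∀ i j, M i j ≠ ⊤)
    (hX : Integrable entryBound ν) (hγ : HasComponentGrowthRates (arcRel ν id) ν γ) {i : Fin d}
    {L : EReal} (hL : ∀ᵐ f ∂(seqLaw ν), Tendsto (fun n => mpScale n (lvec n f i)) atTop (𝓝 L)) :
    limFormula (arcRel ν id) γ i ≤ L := by
  by_contra! hlt
  obtain ⟨a, hLa, ha⟩ := EReal.lt_iff_exists_real_btwn.1 hlt
  obtain ⟨f, hfa, hfL⟩ := ((frequently_ae_mem_iff.2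
    (measure_growthSet_ne_zero_of_lt_limFormula htop hX hγ ha)).and_eventually hL).exists
  exact hLa.not_ge (le_of_tendsto_of_mem_growthSet hfa hfL)

lemma ae_exists_limFormula_le_of_ae_tendsto (htop : ∀ᵐ M ∂ν, ∀ i j, M i j ≠ ⊤)
    (hrow : ∀ᵐ M ∂ν, ∀ i, ∃ j, M i j ≠ ⊥) (hX : Integrable entryBound ν)
    (hγ : HasComponentGrowthRates (arcRel ν id) ν γ) {i : Fin d} {L : EReal}
    (hL : ∀ᵐ f ∂(seqLaw ν), Tendsto (fun n => mpScale n (lvec n f i)) atTop (𝓝 L)) :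
    ∀ᵐ M ∂ν, ∃ j, M i j ≠ ⊥ ∧
      limFormula (arcRel ν id) γ i ≤ limFormula (arcRel ν id) γ j := by
  have hupper := ae_all_iff.2 (ae_forall_eventually_lvec_le htop hX hγ)
  filter_upwards [htop, hrow, ae_consSeq_of_ae hL] with M hM hMrow hML
  obtain ⟨f, hf, hfL⟩ := (hupper.and hML).exists
  obtain ⟨j, hj, hmax⟩ := (Set.toFinite {j | M i j ≠ ⊥}).exists_maximalFor
    (limFormula (arcRel ν id) γ) _ (hMrow i)
  refine ⟨j, hj, ?_⟩
  by_contra! hlt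
  obtain ⟨b, hjb, hb⟩ := EReal.lt_iff_exists_real_btwn.1 hlt
  have hLb : L ≤ b := le_of_tendsto_consSeq hM
    (fun k hk => hf k b (((le_total _ _).elim id (hmax hk)).trans_lt hjb)) hfL
  exact hb.not_ge ((limFormula_le_of_ae_tendsto htop hX hγ hL).trans hLb)

lemma exists_ae_tendsto_lvec_iff (htop : ∀ᵐ M ∂ν, ∀ i j, M i j ≠ ⊤)
    (hrow : ∀ᵐ M ∂ν, ∀ i, ∃ j, M i j ≠ ⊥) (hX : Integrable entryBound ν)
    (hγ : HasComponentGrowthRates (arcRel ν id) ν γ) :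
    (∃ L : Fin d → EReal, ∀ᵐ f ∂(seqLaw ν), ∀ i,
        Tendsto (fun n => mpScale n (lvec n f i)) atTop (𝓝 (L i)))
      ↔
    ∀ c, IsSCC (arcRel ν id) c → ∀ᵐ M ∂ν, ∀ i ∈ Hset (arcRel ν id) γ c,
      ∃ j ∈ Hset (arcRel ν id) γ c, M i j ≠ ⊥ := by
  constructor
  · rintro ⟨L, hL⟩ c ⟨o, rfl⟩
    have hmax := ae_all_iff.2 fun i =>
      ae_exists_limFormula_le_of_ae_tendsto htop hrow hX hγ (ae_all_iff.1 hL i)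
    filter_upwards [hmax, ae_arcRel ν id] with M hM hr i hi
    obtain ⟨j, hij, hle⟩ := hM i
    obtain ⟨hoi, hio⟩ := mem_Hset_sccOf_iff.1 hi
    have hoj := hoi.tail (hr i j hij)
    exact ⟨j, mem_Hset_sccOf_iff.2
      ⟨hoj, (limFormula_le_of_reach hoj).antisymm (hio ▸ hle)⟩, hij⟩
  · exact fun hH => ⟨limFormula (arcRel ν id) γ, ae_all_iff.2 fun i =>
      ae_tendsto_limFormula htop hX hγ (hH _ (isSCC_sccOf _ i))⟩

end Determinism

lemma arcRel_map_id {Ω : Type*} [MeasurableSpace Ω] (μ : Measure Ω) {d : ℕ}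
    {A : Ω → Fin d → Fin d → EReal} (hA : Measurable A) : arcRel (μ.map A) id = arcRel μ A := by
  ext i j
  have hij := Measure.map_apply (μ := μ) hA (measurableSet_of_support fun p => p i j)
  exact not_congr (Eq.congr_left hij)

theorem y_limit_deterministic_iff_iid_general
    {d : ℕ} {Ω : Type*} [MeasurableSpace Ω] (μ : Measure Ω) [IsProbabilityMeasure μ]
    (A : ℤ → Ω → Fin d → Fin d → EReal)
    (hmeas : ∀ n, Measurable (A n))
    (hindep : iIndepFun A μ)
    (hident : ∀ n, μ.map (A n) = μ.map (A 0))
    (hnotop : ∀ᵐ ω ∂μ, ∀ i j, A 0 ω i j ≠ ⊤)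
    (hrow : ∀ᵐ ω ∂μ, ∀ i, ∃ j, A 0 ω i j ≠ ⊥)
    (hint : ∀ i, Integrable (fun ω => (⨆ j, A 0 ω i j).toReal⁺) μ)
    (γ : Set (Fin d) → EReal)
    (hγ : ∀ c : Set (Fin d), IsSCC (arcRel μ (A 0)) c →
      ∀ᵐ ω ∂μ, Tendsto
        (fun n => mpScale n
          (⨆ i, ⨆ (_ : i ∈ c), xvec (fun m => mpRestrict c (A (m : ℤ) ω)) n i))
        atTop (𝓝 (γ c))) :
    (∃ L : Fin d → EReal, ∀ᵐ ω ∂μ, ∀ i,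
        Tendsto (fun n => mpScale n (lvec n (fun k => A (-(k + 1) : ℤ) ω) i)) atTop (𝓝 (L i)))
      ↔
    (∀ c : Set (Fin d), IsSCC (arcRel μ (A 0)) c →
      ∀ᵐ ω ∂μ, ∀ i ∈ Hset (arcRel μ (A 0)) γ c, ∃ j ∈ Hset (arcRel μ (A 0)) γ c,
        A 0 ω i j ≠ ⊥) := by
  have hA0 : AEMeasurable (A 0) μ := (hmeas 0).aemeasurable
  have : IsProbabilityMeasure (μ.map (A 0)) := Measure.isProbabilityMeasure_map hA0
  have htop : ∀ᵐ M ∂(μ.map (A 0)), ∀ i j, M i j ≠ ⊤ :=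
    (ae_map_iff hA0 measurableSet_forall_ne_top).2 hnotop
  have hX : Integrable entryBound (μ.map (A 0)) :=
    (integrable_map_measure measurable_entryBound.aestronglyMeasurable hA0).2
      (integrable_finsetSum Finset.univ fun i _ => hint i)
  have hsupport (Q : (Fin d → Fin d → Prop) → Prop) :
      (∀ᵐ M ∂(μ.map (A 0)), Q fun i j => M i j ≠ ⊥) ↔ ∀ᵐ ω ∂μ, Q fun i j => A 0 ω i j ≠ ⊥ :=
    ae_map_iff hA0 (measurableSet_of_support Q)
  have hΦ : MeasurePreserving (fun ω (k : ℕ) => A (-(k + 1) : ℤ) ω) μ (seqLaw (μ.map (A 0))) :=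
    measurePreserving_seqLaw hmeas hindep hident (e := fun k : ℕ => (-(k + 1) : ℤ))
      fun k l h => by simpa using h
  have key := exists_ae_tendsto_lvec_iff htop ((hsupport fun p => ∀ i, ∃ j, p i j).2 hrow) hX
    (γ := γ) fun c hc => hasGrowthRate_mpRestrict (A := fun n : ℕ => A n) (fun n => hmeas n)
      (hindep.precomp Nat.cast_injective) (fun n => hident n)
      (hγ c (arcRel_map_id μ (hmeas 0) ▸ hc))
  have hlimit (L : Fin d → EReal) : MeasurableSet {f : ℕ → Fin d → Fin d → EReal |
      ∀ i, Tendsto (fun n => mpScale n (lvec n f i)) atTop (𝓝 (L i))} := by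
    simp only [Set.ofPred_forall]
    exact .iInter fun i => measurableSet_tendsto _ fun n => (measurable_lvec n i).const_mul _
  rw [arcRel_map_id μ (hmeas 0), ← hΦ.map_eq] at key
  exact (exists_congr fun L => (ae_map_iff hΦ.measurable.aemeasurable (hlimit L)).symm).trans
    (key.trans (forall₂_congr fun c _ =>
      hsupport fun p => ∀ i ∈ Hset _ γ c, ∃ j ∈ Hset _ γ c, p i j))

/-- **Remark (independent case, right products).**
If `(A(n))_{n∈ℤ}` are i.i.d. random `d × d` matrices over `ℝ_max`, a.s. with at least one
finite entry on each row, and `A(0) ⊗ 0` is integrable, then the a.s. limit of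
`(1/n) y(n,0)` (which exists) is deterministic iff for every s.c.c. `c` of `𝒢(A)` the
submatrix of `A(0)` indexed by `H_c` a.s. has at least one finite entry on each row. -/
theorem y_limit_deterministic_iff_iid
    {d : ℕ} {Ω : Type*} [MeasurableSpace Ω] (μ : Measure Ω) [IsProbabilityMeasure μ]
    (A : ℤ → Ω → Fin d → Fin d → EReal)
    (hmeas : ∀ n, Measurable (A n))
    (hindep : iIndepFun A μ)
    (hident : ∀ n, μ.map (A n) = μ.map (A 0))
    (hnotop : ∀ n ω i j, A n ω i j ≠ ⊤)
    (hrow : ∀ n, ∀ᵐ ω ∂μ, ∀ i, ∃ j, A n ω i j ≠ ⊥)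
    (hint : ∀ i, Integrable (fun ω => (⨆ j, A 0 ω i j).toReal) μ)
    (γ : Set (Fin d) → EReal)
    (hγ : ∀ c : Set (Fin d), IsSCC (arcRel μ (A 0)) c →
      ∀ᵐ ω ∂μ, Tendsto
        (fun n => mpScale n
          (⨆ i, ⨆ (_ : i ∈ c), xvec (fun m => mpRestrict c (A (m : ℤ) ω)) n i))
        atTop (𝓝 (γ c))) :
    (∃ L : Fin d → EReal, ∀ᵐ ω ∂μ, ∀ i,
        Tendsto (fun n => mpScale n (lvec n (fun k => A (-(k + 1) : ℤ) ω) i)) atTop (𝓝 (L i)))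
      ↔
    (∀ c : Set (Fin d), IsSCC (arcRel μ (A 0)) c →
      ∀ᵐ ω ∂μ, ∀ i ∈ Hset (arcRel μ (A 0)) γ c, ∃ j ∈ Hset (arcRel μ (A 0)) γ c,
        A 0 ω i j ≠ ⊥) := by
  exact y_limit_deterministic_iff_iid_general μ A hmeas hindep hident
    (.of_forall fun ω => hnotop 0 ω) (hrow 0) (fun i => (hint i).pos_part) γ hγ
end
end

section
/- Let B = [[0,-∞,-∞],[0,-∞,-∞],[0,1,1]] and C = [[0,-∞,-∞],[0,-∞,0],[0,0,-∞]] be 3×3 matrices over ℝ_max, and let (A(n))_{n∈ℕ} be i.i.d. random matrices with ℙ(A(n)=B)=p and ℙ(A(n)=C)=1-p, where 0 < p < 1. Then almost surely: x₁(n,0) = 0 for all n (so lim_n (1/n)·x₁(n,0) = 0), max_i x_i(n+1,0) = #{0 ≤ k ≤ n : A(k) = B}, and for i ∈ {2,3}, liminf_n (1/n)·x_i(n,0) = 0 and limsup_n (1/n)·x_i(n,0) = p. In particular (1/n)·x(n,0) almost surely does not converge. -/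
open Filter MeasureTheory ProbabilityTheory Topology

noncomputable section

/-- The matrix `B` of the Bousch–Mairesse example. -/
def exB : Fin 3 → Fin 3 → EReal := ![![0, ⊥, ⊥], ![0, ⊥, ⊥], ![0, 1, 1]]

/-- The matrix `C` of the Bousch–Mairesse example. -/
def exC : Fin 3 → Fin 3 → EReal := ![![0, ⊥, ⊥], ![0, ⊥, 0], ![0, 0, ⊥]]

/-!
Each `B` resets `x(n, 0)` to `(0, 0, N)`, where `N` is the number of `B`s so far, and each `C` swaps
the last two coordinates, so `x(n, 0)` is always `(0, 0, N)` or `(0, N, 0)`. By the strong law of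
large numbers `N / n → p`. As `0 < p < 1`, both matrices occur infinitely often, hence so do both
states, and each of the last two coordinates divided by `n` keeps oscillating between `0` and
`N / n`.
-/

section LimsupLiminf

theorem mapClusterPt_of_frequently_eq {α X : Type*} [TopologicalSpace X] {l : Filter α}
    {u w : α → X} {a : X} (hw : Tendsto w l (𝓝 a)) (hfreq : ∃ᶠ n in l, u n = w n) :
    MapClusterPt a l u :=
  mapClusterPt_iff_frequently.mpr fun _ hs =>
    (hfreq.and_eventually (hw hs)).mono fun _ ⟨heq, hmem⟩ => Set.mem_of_eq_of_mem heq hmem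

variable {α X : Type*} [CompleteLinearOrder X] [TopologicalSpace X] [OrderTopology X]
  {l : Filter α} [l.NeBot] {u w : α → X} {a : X}

theorem limsup_eq_of_le_of_frequently_eq (hle : u ≤ w) (hw : Tendsto w l (𝓝 a))
    (hfreq : ∃ᶠ n in l, u n = w n) : limsup u l = a :=
  le_antisymm ((limsup_le_limsup (.of_forall hle)).trans_eq hw.limsup_eq)
    (mapClusterPt_of_frequently_eq hw hfreq).le_limsup

theorem liminf_eq_of_le_of_frequently_eq (hle : w ≤ u) (hw : Tendsto w l (𝓝 a))
    (hfreq : ∃ᶠ n in l, u n = w n) : liminf u l = a :=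
  limsup_eq_of_le_of_frequently_eq (X := Xᵒᵈ) hle hw hfreq

theorem not_exists_tendsto_of_liminf_ne_limsup (h : liminf u l ≠ limsup u l) :
    ¬ ∃ a, Tendsto u l (𝓝 a) :=
  fun ⟨_, ha⟩ => h (ha.liminf_eq.trans ha.limsup_eq.symm)

end LimsupLiminf

section Density

theorem natCast_count_eq_sum (P : ℕ → Prop) [DecidablePred P] (n : ℕ) :
    (Nat.count P n : ℝ) = ∑ k ∈ Finset.range n, if P k then 1 else 0 := by
  rw [Nat.count_eq_card_filter_range, Finset.sum_boole]

variable {P : ℕ → Prop} [DecidablePred P] {d : ℝ}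

theorem tendsto_count_div_of_tendsto
    (h : Tendsto (fun n => if P n then (1 : ℝ) else 0) atTop (𝓝 d)) :
    Tendsto (fun n : ℕ => (Nat.count P n : ℝ) / n) atTop (𝓝 d) := by
  simpa only [natCast_count_eq_sum, div_eq_inv_mul] using h.cesaro

theorem frequently_of_tendsto_count_div (hd : d ≠ 0)
    (h : Tendsto (fun n : ℕ => (Nat.count P n : ℝ) / n) atTop (𝓝 d)) : ∃ᶠ n in atTop, P n := by
  intro hnot
  have hzero : Tendsto (fun n => if P n then (1 : ℝ) else 0) atTop (𝓝 0) :=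
    tendsto_nhds_of_eventually_eq (hnot.mono fun _ hn => if_neg hn)
  exact hd (tendsto_nhds_unique h (tendsto_count_div_of_tendsto hzero))

theorem frequently_not_of_tendsto_count_div (hd : d ≠ 1)
    (h : Tendsto (fun n : ℕ => (Nat.count P n : ℝ) / n) atTop (𝓝 d)) :
    ∃ᶠ n in atTop, ¬ P n := by
  intro hnotnot
  have hone : Tendsto (fun n => if P n then (1 : ℝ) else 0) atTop (𝓝 1) :=
    tendsto_nhds_of_eventually_eq (hnotnot.mono fun _ hn => if_pos (not_not.mp hn))
  exact hd (tendsto_nhds_unique h (tendsto_count_div_of_tendsto hone))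

end Density

section Probability

variable {Ω : Type*} [MeasurableSpace Ω] {μ : Measure Ω}

theorem nullMeasurableSet_setOf {P : Ω → Prop} (hP : AEMeasurable P μ) :
    NullMeasurableSet {ω | P ω} μ := by
  simpa using hP.nullMeasurableSet_preimage (measurableSet_singleton True)

variable [IsProbabilityMeasure μ]

theorem union_mem_ae_of_measure_add_eq_one {s t : Set Ω} (hs : NullMeasurableSet s μ)
    (ht : NullMeasurableSet t μ) (hdisj : AEDisjoint μ s t) (hadd : μ s + μ t = 1) :
    s ∪ t ∈ ae μ := by
  rwa [mem_ae_iff, prob_compl_eq_zero_iff₀ (hs.union ht), measure_union₀ ht hdisj]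

theorem identDistrib_of_measure_setOf_eq {Ω' : Type*} [MeasurableSpace Ω'] {ν : Measure Ω'}
    [IsProbabilityMeasure ν] {P : Ω → Prop} {Q : Ω' → Prop} (hP : AEMeasurable P μ)
    (hQ : AEMeasurable Q ν) (h : μ {ω | P ω} = ν {ω | Q ω}) : IdentDistrib P Q μ ν := by
  refine ⟨hP, hQ, Measure.ext_of_singleton fun q => ?_⟩
  rw [Measure.map_apply_of_aemeasurable hP (measurableSet_singleton q),
    Measure.map_apply_of_aemeasurable hQ (measurableSet_singleton q)]
  by_cases hq : q
  · simpa [Set.preimage, hq] using h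
  · have hcompl : μ {ω | P ω}ᶜ = ν {ω | Q ω}ᶜ := by
      rw [prob_compl_eq_one_sub₀ (nullMeasurableSet_setOf hP),
        prob_compl_eq_one_sub₀ (nullMeasurableSet_setOf hQ), h]
    simpa [Set.preimage, hq, Set.compl_ofPred] using hcompl

theorem ae_tendsto_count_div {P : ℕ → Ω → Prop} [∀ n ω, Decidable (P n ω)]
    (hP : ∀ n, AEMeasurable (P n) μ) (hindep : Pairwise fun i j => P i ⟂ᵢ[μ] P j)
    (heq : ∀ n, μ {ω | P n ω} = μ {ω | P 0 ω}) :
    ∀ᵐ ω ∂μ, Tendsto (fun n : ℕ => (Nat.count (P · ω) n : ℝ) / n) atTop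
      (𝓝 (μ.real {ω | P 0 ω})) := by
  classical
  let g : Prop → ℝ := fun q => if q then 1 else 0
  have hg : Measurable g := measurable_from_top
  have hident (n : ℕ) : IdentDistrib (g ∘ P n) (g ∘ P 0) μ μ :=
    (identDistrib_of_measure_setOf_eq (hP n) (hP 0) (heq n)).comp hg
  have hset : NullMeasurableSet {ω | P 0 ω} μ := nullMeasurableSet_setOf (hP 0)
  have hindicator : g ∘ P 0 = {ω | P 0 ω}.indicator fun _ => 1 := by
    ext ω
    simp [g, Set.indicator_apply]
  have hint : Integrable (g ∘ P 0) μ :=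
    hindicator ▸ (integrable_const 1).indicator₀ hset
  have hmean : μ[g ∘ P 0] = μ.real {ω | P 0 ω} := by
    rw [hindicator, integral_indicator₀ hset, setIntegral_one_eq_measureReal]
  have hlaw := strong_law_ae_real (fun n => g ∘ P n) hint
    (fun _ _ hij => (hindep hij).comp hg hg) hident
  rw [hmean] at hlaw
  simp only [g, Function.comp_apply] at hlaw
  simp only [natCast_count_eq_sum]
  convert hlaw

end Probability

theorem mpScale_zero (n : ℕ) : mpScale n 0 = 0 := mul_zero _

theorem mpScale_natCast (n m : ℕ) : mpScale n m = ((m / n : ℝ) : EReal) := by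
  rw [mpScale, ← EReal.coe_coe_eq_natCast, ← EReal.coe_mul, div_eq_inv_mul]

theorem mpScale_mono (n : ℕ) : Monotone (mpScale n) := fun _ _ h =>
  mul_le_mul_of_nonneg_left h (EReal.coe_nonneg.mpr (inv_nonneg.mpr n.cast_nonneg))

theorem mpVec_exB_of_nonneg {a b : EReal} (h : 0 ≤ a ⊔ b) :
    mpVec exB ![0, a, b] = ![0, 0, 1 + (a ⊔ b)] := by
  have hnonneg : 0 ≤ 1 + (a ⊔ b) := add_nonneg zero_le_one h
  rw [← max_add_add_left] at hnonneg ⊢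
  funext i
  fin_cases i <;> simp [mpVec, exB, iSup_fin_three, sup_assoc, hnonneg]

theorem mpVec_exC_of_nonneg {a b : EReal} (ha : 0 ≤ a) (hb : 0 ≤ b) :
    mpVec exC ![0, a, b] = ![0, b, a] := by
  funext i
  fin_cases i <;> simp [mpVec, exC, iSup_fin_three, ha, hb]

theorem exB_ne_exC : exB ≠ exC := fun h => by
  simpa [exB, exC] using congrFun₂ h 2 1

/-- The number of indices `k < n` with `f k = B`; for a sequence of `B`s and `C`s this is the
largest coordinate of `xvec f n`. -/
def countB (f : ℕ → Fin 3 → Fin 3 → EReal) (n : ℕ) : ℕ := Nat.count (f · = exB) n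

section Trajectory

variable {f : ℕ → Fin 3 → Fin 3 → EReal} {n : ℕ} {i : Fin 3} {p : ℝ}

theorem countB_succ_of_eq_exB (h : f n = exB) : countB f (n + 1) = countB f n + 1 := by
  rw [countB, Nat.count_succ, if_pos h, countB]

theorem countB_succ_of_eq_exC (h : f n = exC) : countB f (n + 1) = countB f n := by
  rw [countB, Nat.count_succ, if_neg (h ▸ exB_ne_exC.symm), countB, add_zero]

theorem xvec_succ_of_eq_exB {m : ℕ} (h : f n = exB)
    (hx : xvec f n = ![0, 0, (m : EReal)] ∨ xvec f n = ![0, (m : EReal), 0]) :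
    xvec f (n + 1) = ![0, 0, ((m + 1 : ℕ) : EReal)] := by
  rw [xvec, h]
  rcases hx with hx | hx <;> rw [hx, mpVec_exB_of_nonneg] <;> simp [add_comm]

theorem xvec_succ_of_eq_exC {a b : EReal} (h : f n = exC) (ha : 0 ≤ a) (hb : 0 ≤ b)
    (hx : xvec f n = ![0, a, b]) : xvec f (n + 1) = ![0, b, a] := by
  rw [xvec, h, hx, mpVec_exC_of_nonneg ha hb]

variable (hf : ∀ n, f n = exB ∨ f n = exC)
include hf

theorem xvec_eq_or_eq (n : ℕ) :
    xvec f n = ![0, 0, (countB f n : EReal)] ∨ xvec f n = ![0, (countB f n : EReal), 0] := by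
  induction n with
  | zero =>
    left
    ext i
    fin_cases i <;> simp [xvec, countB]
  | succ n ih =>
    rcases hf n with h | h
    · rw [countB_succ_of_eq_exB h]
      exact .inl (xvec_succ_of_eq_exB h ih)
    · rw [countB_succ_of_eq_exC h]
      have hcount : (0 : EReal) ≤ countB f n := mod_cast (countB f n).zero_le
      exact ih.symm.imp (xvec_succ_of_eq_exC h hcount le_rfl)
        (xvec_succ_of_eq_exC h le_rfl hcount)

theorem xvec_apply_zero (n : ℕ) : xvec f n 0 = 0 := by
  rcases xvec_eq_or_eq hf n with h | h <;> simp [h]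

theorem iSup_xvec (n : ℕ) : ⨆ i, xvec f n i = countB f n := by
  rcases xvec_eq_or_eq hf n with h | h <;> simp [h, iSup_fin_three]

theorem xvec_nonneg (n : ℕ) (i : Fin 3) : 0 ≤ xvec f n i := by
  rcases xvec_eq_or_eq hf n with h | h <;> fin_cases i <;> simp [h]

theorem xvec_le_countB (n : ℕ) (i : Fin 3) : xvec f n i ≤ countB f n :=
  (le_iSup (xvec f n) i).trans_eq (iSup_xvec hf n)

theorem frequently_xvec_eq_right (hB : ∃ᶠ n in atTop, f n = exB) :
    ∃ᶠ n in atTop, xvec f n = ![0, 0, (countB f n : EReal)] := by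
  refine (tendsto_add_atTop_nat 1).frequently (hB.mono fun n h => ?_)
  rw [countB_succ_of_eq_exB h]
  exact xvec_succ_of_eq_exB h (xvec_eq_or_eq hf n)

theorem frequently_xvec_eq_left (hC : ∃ᶠ n in atTop, f n = exC) :
    ∃ᶠ n in atTop, xvec f n = ![0, (countB f n : EReal), 0] := by
  have hstep (n : ℕ) (h : f n = exC) : xvec f n = ![0, (countB f n : EReal), 0] ∨
      xvec f (n + 1) = ![0, (countB f (n + 1) : EReal), 0] := by
    rw [countB_succ_of_eq_exC h]
    have hcount : (0 : EReal) ≤ countB f n := mod_cast (countB f n).zero_le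
    exact (xvec_eq_or_eq hf n).symm.imp_right (xvec_succ_of_eq_exC h le_rfl hcount)
  rcases frequently_or_distrib.mp (hC.mono hstep) with h | h
  · exact h
  · exact (tendsto_add_atTop_nat 1).frequently h

theorem frequently_xvec_apply_eq_zero (hB : ∃ᶠ n in atTop, f n = exB)
    (hC : ∃ᶠ n in atTop, f n = exC) (i : Fin 3) : ∃ᶠ n in atTop, xvec f n i = 0 := by
  fin_cases i
  · exact .of_forall (xvec_apply_zero hf)
  · exact (frequently_xvec_eq_right hf hB).mono fun n h => by simp [h]
  · exact (frequently_xvec_eq_left hf hC).mono fun n h => by simp [h]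

theorem frequently_xvec_apply_eq_countB (hB : ∃ᶠ n in atTop, f n = exB)
    (hC : ∃ᶠ n in atTop, f n = exC) (hi : i ≠ 0) :
    ∃ᶠ n in atTop, xvec f n i = countB f n := by
  fin_cases i
  · exact absurd rfl hi
  · exact (frequently_xvec_eq_left hf hC).mono fun n h => by simp [h]
  · exact (frequently_xvec_eq_right hf hB).mono fun n h => by simp [h]

theorem liminf_mpScale_xvec (hB : ∃ᶠ n in atTop, f n = exB) (hC : ∃ᶠ n in atTop, f n = exC)
    (i : Fin 3) : liminf (fun n => mpScale n (xvec f n i)) atTop = 0 := by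
  refine liminf_eq_of_le_of_frequently_eq (fun n => ?_) tendsto_const_nhds
    ((frequently_xvec_apply_eq_zero hf hB hC i).mono fun n h => ?_)
  · exact (mpScale_zero n).symm.trans_le (mpScale_mono n (xvec_nonneg hf n i))
  · rw [h, mpScale_zero]

theorem limsup_mpScale_xvec (hB : ∃ᶠ n in atTop, f n = exB) (hC : ∃ᶠ n in atTop, f n = exC)
    (hlim : Tendsto (fun n : ℕ => (countB f n : ℝ) / n) atTop (𝓝 p)) (hi : i ≠ 0) :
    limsup (fun n => mpScale n (xvec f n i)) atTop = p := by
  have hcount : Tendsto (fun n => mpScale n (countB f n)) atTop (𝓝 (p : EReal)) := by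
    simpa only [mpScale_natCast, EReal.tendsto_coe] using hlim
  exact limsup_eq_of_le_of_frequently_eq (fun n => mpScale_mono n (xvec_le_countB hf n i)) hcount
    ((frequently_xvec_apply_eq_countB hf hB hC hi).mono fun n h => congrArg (mpScale n) h)

theorem frequently_eq_exB_and_frequently_eq_exC (hp : 0 < p) (hp1 : p < 1)
    (hlim : Tendsto (fun n : ℕ => (countB f n : ℝ) / n) atTop (𝓝 p)) :
    (∃ᶠ n in atTop, f n = exB) ∧ ∃ᶠ n in atTop, f n = exC :=
  ⟨frequently_of_tendsto_count_div hp.ne' hlim,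
    (frequently_not_of_tendsto_count_div hp1.ne hlim).mono fun n => (hf n).resolve_left⟩

end Trajectory

section RandomTrajectory

variable {Ω : Type*} [MeasurableSpace Ω] {μ : Measure Ω} [IsProbabilityMeasure μ] {p : ℝ}

theorem ae_eq_exB_or_eq_exC {X : Ω → Fin 3 → Fin 3 → EReal} (hX : AEMeasurable X μ)
    (hp : 0 ≤ p) (hp1 : p ≤ 1) (hB : μ {ω | X ω = exB} = ENNReal.ofReal p)
    (hC : μ {ω | X ω = exC} = ENNReal.ofReal (1 - p)) :
    ∀ᵐ ω ∂μ, X ω = exB ∨ X ω = exC := by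
  have hdisj : Disjoint {ω | X ω = exB} {ω | X ω = exC} :=
    Set.disjoint_left.mpr fun ω h h' => exB_ne_exC (h.symm.trans h')
  have hadd : μ {ω | X ω = exB} + μ {ω | X ω = exC} = 1 := by
    rw [hB, hC, ← ENNReal.ofReal_add hp (sub_nonneg.mpr hp1), add_sub_cancel, ENNReal.ofReal_one]
  exact union_mem_ae_of_measure_add_eq_one
    (hX.nullMeasurableSet_preimage (measurableSet_singleton exB))
    (hX.nullMeasurableSet_preimage (measurableSet_singleton exC)) hdisj.aedisjoint hadd

theorem ae_tendsto_countB_div {A : ℕ → Ω → Fin 3 → Fin 3 → EReal}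
    (hA : ∀ n, AEMeasurable (A n) μ) (hindep : Pairwise fun i j => A i ⟂ᵢ[μ] A j) (hp : 0 ≤ p)
    (hB : ∀ n, μ {ω | A n ω = exB} = ENNReal.ofReal p) :
    ∀ᵐ ω ∂μ, Tendsto (fun n : ℕ => (countB (A · ω) n : ℝ) / n) atTop (𝓝 p) := by
  have hmem : Measurable (· = exB) := (measurableSet_singleton exB).mem
  have hlaw := ae_tendsto_count_div (P := fun n ω => A n ω = exB)
    (fun n => hmem.comp_aemeasurable (hA n)) (fun _ _ hij => (hindep hij).comp hmem hmem)
    (fun n => (hB n).trans (hB 0).symm)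
  simpa only [countB, measureReal_def, hB, ENNReal.toReal_ofReal hp] using hlaw

end RandomTrajectory

open Classical in
theorem bousch_mairesse_example_general
    {Ω : Type*} [MeasurableSpace Ω] (μ : Measure Ω) [IsProbabilityMeasure μ]
    (p : ℝ) (hp : 0 < p) (hp1 : p < 1)
    (A : ℕ → Ω → Fin 3 → Fin 3 → EReal)
    (hmeas : ∀ n, AEMeasurable (A n) μ)
    (hindep : Pairwise fun i j => A i ⟂ᵢ[μ] A j)
    (hB : ∀ n, μ {ω | A n ω = exB} = ENNReal.ofReal p)
    (hC : ∀ n, μ {ω | A n ω = exC} = ENNReal.ofReal (1 - p)) :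
    ∀ᵐ ω ∂μ,
      (∀ n, xvec (fun m => A m ω) n 0 = 0) ∧
      Tendsto (fun n => mpScale n (xvec (fun m => A m ω) n 0)) atTop (𝓝 (0 : EReal)) ∧
      (∀ n, (⨆ i, xvec (fun m => A m ω) (n + 1) i) =
        ((((Finset.range (n + 1)).filter (fun k => A k ω = exB)).card : ℝ) : EReal)) ∧
      (∀ i : Fin 3, i ≠ 0 →
        Filter.liminf (fun n => mpScale n (xvec (fun m => A m ω) n i)) atTop = (0 : EReal) ∧
        Filter.limsup (fun n => mpScale n (xvec (fun m => A m ω) n i)) atTop = ((p : ℝ) : EReal)) ∧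
      ¬ (∀ i : Fin 3, ∃ l : EReal,
        Tendsto (fun n => mpScale n (xvec (fun m => A m ω) n i)) atTop (𝓝 l)) := by
  have hvalues : ∀ᵐ ω ∂μ, ∀ n, A n ω = exB ∨ A n ω = exC :=
    ae_all_iff.mpr fun n => ae_eq_exB_or_eq_exC (hmeas n) hp.le hp1.le (hB n) (hC n)
  filter_upwards [hvalues, ae_tendsto_countB_div hmeas hindep hp.le hB] with ω hf hlim
  obtain ⟨hfreqB, hfreqC⟩ := frequently_eq_exB_and_frequently_eq_exC hf hp hp1 hlim
  have hzero := xvec_apply_zero hf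
  have hinf := liminf_mpScale_xvec hf hfreqB hfreqC
  have hsup {i : Fin 3} (hi : i ≠ 0) := limsup_mpScale_xvec hf hfreqB hfreqC hlim hi
  refine ⟨hzero, ?_, fun n => ?_, fun i hi => ⟨hinf i, hsup hi⟩, fun hconv => ?_⟩
  · simp only [hzero, mpScale_zero, tendsto_const_nhds]
  · rw [iSup_xvec hf, countB, Nat.count_eq_card_filter_range, EReal.coe_coe_eq_natCast]
  · refine not_exists_tendsto_of_liminf_ne_limsup ?_ (hconv 1)
    rw [hinf, hsup one_ne_zero]
    exact_mod_cast hp.ne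

open Classical in
/-- **Example (Bousch–Mairesse: independence is not sufficient).**
Let `(A(n))_{n∈ℕ}` be i.i.d. taking the values `B` and `C` with probabilities `p` and
`1 - p`, `0 < p < 1`. Then almost surely: `x₁(n,0) = 0` for all `n` (so
`(1/n) x₁(n,0) → 0`), `max_i x_i(n+1,0) = #{0 ≤ k ≤ n : A(k) = B}`, and for `i ∈ {2,3}`,
`liminf (1/n) x_i(n,0) = 0` and `limsup (1/n) x_i(n,0) = p`; in particular `(1/n) x(n,0)`
a.s. does not converge. -/
theorem bousch_mairesse_example
    {Ω : Type*} [MeasurableSpace Ω] (μ : Measure Ω) [IsProbabilityMeasure μ]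
    (p : ℝ) (hp : 0 < p) (hp1 : p < 1)
    (A : ℕ → Ω → Fin 3 → Fin 3 → EReal)
    (hmeas : ∀ n, Measurable (A n))
    (hindep : iIndepFun A μ)
    (hB : ∀ n, μ {ω | A n ω = exB} = ENNReal.ofReal p)
    (hC : ∀ n, μ {ω | A n ω = exC} = ENNReal.ofReal (1 - p)) :
    ∀ᵐ ω ∂μ,
      (∀ n, xvec (fun m => A m ω) n 0 = 0) ∧
      Tendsto (fun n => mpScale n (xvec (fun m => A m ω) n 0)) atTop (𝓝 (0 : EReal)) ∧
      (∀ n, (⨆ i, xvec (fun m => A m ω) (n + 1) i) =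
        ((((Finset.range (n + 1)).filter (fun k => A k ω = exB)).card : ℝ) : EReal)) ∧
      (∀ i : Fin 3, i ≠ 0 →
        Filter.liminf (fun n => mpScale n (xvec (fun m => A m ω) n i)) atTop = (0 : EReal) ∧
        Filter.limsup (fun n => mpScale n (xvec (fun m => A m ω) n i)) atTop = ((p : ℝ) : EReal)) ∧
      ¬ (∀ i : Fin 3, ∃ l : EReal,
        Tendsto (fun n => mpScale n (xvec (fun m => A m ω) n i)) atTop (𝓝 l)) :=
  bousch_mairesse_example_general μ p hp hp1 A (fun n => (hmeas n).aemeasurable)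
    (fun _ _ hij => hindep.indepFun hij) hB hC
end
end

section
/- Let (X_n)_{n∈ℕ} be i.i.d. real random variables with X_n ≥ 1 almost surely and 𝔼[X_n] = +∞, and define random 3×3 matrices over ℝ_max by A(n) = [[-X_n, -X_n, 0],[-∞, 0, 0],[-∞, -∞, -1]]. Then for every n ≥ 1, x(n,0) = (max(-X_{n-1}, -(n-1)), 0, -n)ᵀ, and (1/n)·x(n,0) converges to (0,0,-1)ᵀ in probability but does not converge almost surely. -/
open Filter MeasureTheory ProbabilityTheory Topology

noncomputable section

/-- The matrix of the integrability example: `A(n) = [[-Xₙ, -Xₙ, 0], [-∞, 0, 0], [-∞, -∞, -1]]`. -/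
def exIntegMat (x : ℝ) : Fin 3 → Fin 3 → EReal :=
  ![![((-x : ℝ) : EReal), ((-x : ℝ) : EReal), 0], ![⊥, 0, 0], ![⊥, ⊥, -1]]

/-!
Since `Xₙ ≥ 0`, induction gives `x(n+1, 0) = (max(-Xₙ, -n), 0, -(n+1))`, so only the first
coordinate of `x(n+1, 0) / (n+1)` matters. It is at most `|Xₙ| / (n+1)` in absolute value, hence
tends to `0` in probability because the laws of the `Xₙ` are tight; along a subsequence it then
tends to `0` almost surely, so `0` is almost surely one of its cluster points. On the other hand
`𝔼[X₀] = ∞` gives `∑ₙ ℙ(Xₙ > n) = ∞`, so by the second Borel–Cantelli lemma `Xₙ > n` infinitely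
often, and at each such `n ≥ 1` the first coordinate equals `-n / (n+1) ≤ -1/2`. Hence it almost
surely has no limit.
-/

section ConvergenceInMeasure

variable {Ω ι E F : Type*} [MeasurableSpace Ω] {μ : Measure Ω} {l : Filter ι}

lemma tendsto_measure_notMem_of_tendstoInMeasure_const [PseudoEMetricSpace E] {f : ι → Ω → E}
    {c : E} (hf : TendstoInMeasure μ f l fun _ => c) {U : Set E} (hU : U ∈ 𝓝 c) :
    Tendsto (fun i => μ {ω | f i ω ∉ U}) l (𝓝 0) := by
  obtain ⟨ε, hε, hball⟩ := EMetric.mem_nhds_iff.1 hU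
  refine tendsto_of_tendsto_of_tendsto_of_le_of_le tendsto_const_nhds (hf ε hε)
    (fun _ => zero_le) fun i => measure_mono fun ω hω => ?_
  exact not_lt.1 fun hlt => hω (hball (Metric.mem_eball.2 hlt))

lemma ae_mapClusterPt_of_tendstoInMeasure [PseudoEMetricSpace E] [l.NeBot]
    [l.IsCountablyGenerated] {f : ι → Ω → E} {g : Ω → E} (hf : TendstoInMeasure μ f l g) :
    ∀ᵐ ω ∂μ, MapClusterPt (g ω) l fun i => f i ω := by
  obtain ⟨ns, hns, hlim⟩ := hf.exists_seq_tendsto_ae'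
  filter_upwards [hlim] with ω hω
  exact MapClusterPt.of_comp hns hω.mapClusterPt

lemma tendstoInMeasure_zero_of_isTightMeasureSet_of_norm_le [NormedAddCommGroup E]
    [MeasurableSpace E] [OpensMeasurableSpace E] [SeminormedAddCommGroup F] {X : ι → Ω → E}
    {Y : ι → Ω → F} {c : ι → ℝ} (hX : ∀ i, AEMeasurable (X i) μ)
    (htight : IsTightMeasureSet (Set.range fun i => μ.map (X i))) (hc : Tendsto c l (𝓝 0))
    (hYX : ∀ i ω, ‖Y i ω‖ ≤ c i * ‖X i ω‖) :
    TendstoInMeasure μ Y l fun _ => 0 := by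
  simp only [tendstoInMeasure_iff_norm, sub_zero]
  refine fun ε hε => ENNReal.tendsto_nhds_zero.2 fun δ hδ => ?_
  obtain ⟨r, htail⟩ := (ENNReal.tendsto_nhds_zero.1
    (tendsto_measure_norm_gt_of_isTightMeasureSet htight) δ hδ).exists
  have hcr : ∀ᶠ i in l, |c i| * r < ε := by
    have hlim := hc.abs.mul_const r
    rw [abs_zero, zero_mul] at hlim
    exact hlim.eventually_lt_const hε
  filter_upwards [hcr] with i hi
  calc μ {ω | ε ≤ ‖Y i ω‖}
      ≤ μ {ω | r < ‖X i ω‖} := by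
        refine measure_mono fun ω (hω : ε ≤ ‖Y i ω‖) => ?_
        by_contra hr
        have hr : ‖X i ω‖ ≤ r := not_lt.1 hr
        refine (hω.trans (hYX i ω)).not_gt (lt_of_le_of_lt ?_ hi)
        gcongr
        exact le_abs_self _
    _ = μ.map (X i) {x | r < ‖x‖} :=
        (Measure.map_apply_of_aemeasurable (hX i)
          (isOpen_lt continuous_const continuous_norm).measurableSet).symm
    _ ≤ ⨆ ν ∈ Set.range fun i => μ.map (X i), ν {x | r < ‖x‖} :=
        le_iSup₂_of_le _ (Set.mem_range_self i) le_rfl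
    _ ≤ δ := htail

end ConvergenceInMeasure

section BorelCantelli

variable {Ω : Type*} [MeasurableSpace Ω] {μ : Measure Ω}

lemma tsum_ite_natCast_lt {R : Type*} [Semiring R] [LinearOrder R] [FloorSemiring R] (x : R) :
    ∑' n : ℕ, (if (n : R) < x then 1 else 0 : ENNReal) = ⌈x⌉₊ := by
  simp only [← Nat.lt_ceil]
  rw [tsum_eq_sum (s := Finset.range ⌈x⌉₊) fun n hn => if_neg (by simpa using hn),
    Finset.sum_congr rfl fun n hn => if_pos (Finset.mem_range.1 hn)]
  simp

lemma lintegral_ofReal_le_tsum_measure_natCast_lt {f : Ω → ℝ} (hf : AEMeasurable f μ) :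
    ∫⁻ ω, ENNReal.ofReal (f ω) ∂μ ≤ ∑' n : ℕ, μ {ω | (n : ℝ) < f ω} := by
  have hset (n : ℕ) : NullMeasurableSet {ω | (n : ℝ) < f ω} μ :=
    nullMeasurableSet_lt aemeasurable_const hf
  calc ∫⁻ ω, ENNReal.ofReal (f ω) ∂μ
      ≤ ∫⁻ ω, ∑' n : ℕ, {ω | (n : ℝ) < f ω}.indicator 1 ω ∂μ := by
        refine lintegral_mono fun ω => ?_
        simp only [Set.indicator_apply, Set.mem_ofPred_eq, Pi.one_apply, tsum_ite_natCast_lt]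
        exact ENNReal.ofReal_le_of_le_toReal (by simpa using Nat.le_ceil (f ω))
    _ = ∑' n : ℕ, μ {ω | (n : ℝ) < f ω} := by
        rw [lintegral_tsum fun n => measurable_one.aemeasurable.indicator₀ (hset n)]
        exact tsum_congr fun n => lintegral_indicator_one₀ (hset n)

lemma tsum_measure_natCast_lt_eq_top {X : ℕ → Ω → ℝ}
    (hident : ∀ n, IdentDistrib (X n) (X 0) μ μ)
    (hinf : ∫⁻ ω, ENNReal.ofReal (X 0 ω) ∂μ = ⊤) :
    ∑' n : ℕ, μ {ω | (n : ℝ) < X n ω} = ⊤ := by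
  have htail (n : ℕ) : μ {ω | (n : ℝ) < X n ω} = μ {ω | (n : ℝ) < X 0 ω} :=
    (hident n).measure_mem_eq measurableSet_Ioi
  rw [tsum_congr htail, ← top_le_iff, ← hinf]
  exact lintegral_ofReal_le_tsum_measure_natCast_lt (hident 0).aemeasurable_fst

lemma ae_frequently_mem_of_iIndepFun {β : ℕ → Type*} [∀ n, MeasurableSpace (β n)]
    {X : ∀ n, Ω → β n} (hmeas : ∀ n, Measurable (X n)) (hindep : iIndepFun X μ)
    {S : ∀ n, Set (β n)} (hS : ∀ n, MeasurableSet (S n)) (hsum : ∑' n, μ (X n ⁻¹' S n) = ⊤) :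
    ∀ᵐ ω ∂μ, ∃ᶠ n in atTop, X n ω ∈ S n := by
  have := hindep.isProbabilityMeasure
  have hpre (n : ℕ) : MeasurableSet (X n ⁻¹' S n) := hmeas n (hS n)
  have hindepSet : iIndepSet (fun n => X n ⁻¹' S n) μ :=
    (iIndepSet_iff_meas_biInter hpre).2 fun _ => hindep.meas_biInter fun n _ => ⟨S n, hS n, rfl⟩
  filter_upwards [(mem_ae_iff_prob_eq_one (.measurableSet_limsup hpre)).2
    (measure_limsup_eq_one hpre hindepSet hsum)] with ω hω
  exact mem_limsup_iff_frequently_mem.1 hω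

end BorelCantelli

/-- The first coordinate of `x(n+1, 0) / (n+1)` in the integrability example, as a function of the
value `x` of `Xₙ`. -/
def scaledFirstCoord (n : ℕ) (x : ℝ) : ℝ :=
  max (-x) (-n) / (n + 1)

lemma norm_scaledFirstCoord_le (n : ℕ) (x : ℝ) :
    ‖scaledFirstCoord n x‖ ≤ 1 / ((n : ℝ) + 1) * ‖x‖ := by
  have hmax : |max (-x) (-(n : ℝ))| ≤ |x| := by
    refine abs_le.2 ⟨(neg_le_neg (le_abs_self x)).trans (le_max_left _ _), ?_⟩
    exact max_le (neg_le_abs x) ((neg_nonpos.2 n.cast_nonneg).trans (abs_nonneg x))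
  rw [scaledFirstCoord, one_div_mul_eq_div, norm_div, Real.norm_of_nonneg n.cast_add_one_pos.le]
  gcongr
  exact hmax

lemma scaledFirstCoord_le_neg_half {n : ℕ} (hn : 1 ≤ n) {x : ℝ} (hx : n ≤ x) :
    scaledFirstCoord n x ≤ -(1 / 2) := by
  have hn' : (1 : ℝ) ≤ n := by exact_mod_cast hn
  rw [scaledFirstCoord, max_eq_right (neg_le_neg hx), div_le_iff₀ n.cast_add_one_pos]
  linarith

lemma not_tendsto_coe_scaledFirstCoord {x : ℕ → ℝ}
    (hcluster : MapClusterPt 0 atTop fun n => scaledFirstCoord n (x n))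
    (hlarge : ∃ᶠ n : ℕ in atTop, (n : ℝ) < x n) (l : EReal) :
    ¬ Tendsto (fun n => (scaledFirstCoord n (x n) : EReal)) atTop (𝓝 l) := by
  intro hl
  have hzero : ((0 : ℝ) : EReal) = l :=
    eq_of_nhds_neBot
      ((hcluster.continuousAt_comp continuous_coe_real_ereal.continuousAt).clusterPt.mono hl)
  have hneg : l ≤ ((-(1 / 2) : ℝ) : EReal) :=
    le_of_tendsto_of_frequently hl ((hlarge.and_eventually (eventually_ge_atTop 1)).mono
      fun n hn => EReal.coe_le_coe (scaledFirstCoord_le_neg_half hn.2 hn.1.le))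
  rw [← hzero, EReal.coe_le_coe_iff] at hneg
  norm_num at hneg

section ClosedForm

lemma mpVec_exIntegMat_coe (x : ℝ) (v : Fin 3 → ℝ) :
    mpVec (exIntegMat x) (fun i => v i) = fun i =>
      ((![max (-x + max (v 0) (v 1)) (v 2), max (v 1) (v 2), v 2 - 1] i : ℝ) : EReal) := by
  have hmax (a b : ℝ) : ((max a b : ℝ) : EReal) = max (a : EReal) b :=
    EReal.coe_strictMono.monotone.map_max
  ext i
  fin_cases i
  · simp [mpVec, iSup_fin_three, exIntegMat, ← max_add_add_left, hmax]
  · simp [mpVec, iSup_fin_three, exIntegMat, hmax]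
  · simp [mpVec, iSup_fin_three, exIntegMat, sub_eq_neg_add]

variable {x : ℕ → ℝ}

lemma xvec_exIntegMat_succ (hx : ∀ n, 0 ≤ x n) (n : ℕ) :
    xvec (fun m => exIntegMat (x m)) (n + 1) = fun i =>
      ((![max (-x n) (-n), 0, -(n + 1)] i : ℝ) : EReal) := by
  induction n with
  | zero =>
    have hinit : xvec (fun m => exIntegMat (x m)) 0 = fun _ => ((0 : ℝ) : EReal) := rfl
    rw [xvec, hinit, mpVec_exIntegMat_coe]
    simp
  | succ n ih =>
    have hfirst : max (-x n) (-(n : ℝ)) ≤ 0 := by simp [hx n]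
    have hlast : -((n : ℝ) + 1) ≤ 0 := neg_nonpos.2 n.cast_add_one_pos.le
    rw [xvec, ih, mpVec_exIntegMat_coe]
    simp only [Matrix.cons_val, max_eq_right hfirst, max_eq_left hlast, add_zero,
      Nat.cast_add_one, ← neg_add']

lemma mpScale_xvec_exIntegMat_succ (hx : ∀ n, 0 ≤ x n) (n : ℕ) (i : Fin 3) :
    mpScale (n + 1) (xvec (fun m => exIntegMat (x m)) (n + 1) i) =
      ((![scaledFirstCoord n (x n), 0, -1] i : ℝ) : EReal) := by
  have hn : (n : ℝ) + 1 ≠ 0 := n.cast_add_one_ne_zero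
  rw [xvec_exIntegMat_succ hx, mpScale, ← EReal.coe_mul, Nat.cast_add_one, inv_mul_eq_div]
  fin_cases i
  · rfl
  · simp
  · simp only [Fin.reduceFinMk, Matrix.cons_val, neg_div, div_self hn]

end ClosedForm

section RandomOrbit

variable {Ω : Type*} [MeasurableSpace Ω] {μ : Measure Ω} {X : ℕ → Ω → ℝ}

lemma tendstoInMeasure_scaledFirstCoord (hmeas : ∀ n, AEMeasurable (X n) μ)
    (htight : IsTightMeasureSet (Set.range fun n => μ.map (X n))) :
    TendstoInMeasure μ (fun n ω => scaledFirstCoord n (X n ω)) atTop fun _ => 0 :=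
  tendstoInMeasure_zero_of_isTightMeasureSet_of_norm_le hmeas htight
    tendsto_one_div_add_atTop_nhds_zero_nat fun n ω => norm_scaledFirstCoord_le n (X n ω)

lemma tendsto_measure_mpScale_xvec_exIntegMat_notMem (hmeas : ∀ n, AEMeasurable (X n) μ)
    (hnonneg : ∀ᵐ ω ∂μ, ∀ n, 0 ≤ X n ω)
    (htight : IsTightMeasureSet (Set.range fun n => μ.map (X n)))
    (i : Fin 3) {U : Set EReal} (hU : U ∈ 𝓝 ((![0, 0, -1] : Fin 3 → EReal) i)) :
    Tendsto (fun n => μ {ω | mpScale n (xvec (fun m => exIntegMat (X m ω)) n i) ∉ U})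
      atTop (𝓝 0) := by
  have hlim : TendstoInMeasure μ
      (fun n ω => (![scaledFirstCoord n (X n ω), 0, -1] : Fin 3 → ℝ) i) atTop
      fun _ => (![0, 0, -1] : Fin 3 → ℝ) i := by
    fin_cases i
    · exact tendstoInMeasure_scaledFirstCoord hmeas htight
    all_goals exact fun ε hε => by simp [hε.ne']
  have hU' : Real.toEReal ⁻¹' U ∈ 𝓝 ((![0, 0, -1] : Fin 3 → ℝ) i) := by
    refine continuous_coe_real_ereal.continuousAt.preimage_mem_nhds ?_
    fin_cases i <;> exact hU
  rw [← tendsto_add_atTop_iff_nat 1]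
  refine (tendsto_measure_notMem_of_tendstoInMeasure_const hlim hU').congr fun n =>
    measure_congr (eventuallyEq_set.2 ?_)
  filter_upwards [hnonneg] with ω hω
  simp only [mpScale_xvec_exIntegMat_succ hω, Set.mem_preimage]

lemma ae_not_tendsto_mpScale_xvec_exIntegMat (hmeas : ∀ n, Measurable (X n))
    (hindep : iIndepFun X μ) (hnonneg : ∀ᵐ ω ∂μ, ∀ n, 0 ≤ X n ω)
    (htight : IsTightMeasureSet (Set.range fun n => μ.map (X n)))
    (htail : ∑' n : ℕ, μ {ω | (n : ℝ) < X n ω} = ⊤) :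
    ∀ᵐ ω ∂μ, ∀ l : EReal,
      ¬ Tendsto (fun n => mpScale n (xvec (fun m => exIntegMat (X m ω)) n 0)) atTop (𝓝 l) := by
  filter_upwards [hnonneg,
    ae_mapClusterPt_of_tendstoInMeasure
      (tendstoInMeasure_scaledFirstCoord (fun n => (hmeas n).aemeasurable) htight),
    ae_frequently_mem_of_iIndepFun hmeas hindep (fun _ => measurableSet_Ioi) htail]
    with ω hω hcluster hlarge l hl
  refine not_tendsto_coe_scaledFirstCoord hcluster hlarge l
    (((tendsto_add_atTop_iff_nat 1).2 hl).congr fun n => ?_)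
  exact mpScale_xvec_exIntegMat_succ hω n 0

theorem integrability_example_general (hmeas : ∀ n, Measurable (X n)) (hindep : iIndepFun X μ)
    (hnonneg : ∀ᵐ ω ∂μ, ∀ n, 0 ≤ X n ω)
    (htight : IsTightMeasureSet (Set.range fun n => μ.map (X n)))
    (htail : ∑' n : ℕ, μ {ω | (n : ℝ) < X n ω} = ⊤) :
    (∀ᵐ ω ∂μ, ∀ n : ℕ, 1 ≤ n →
      xvec (fun m => exIntegMat (X m ω)) n 0 =
        ((max (-(X (n - 1) ω)) (-((n : ℝ) - 1)) : ℝ) : EReal) ∧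
      xvec (fun m => exIntegMat (X m ω)) n 1 = 0 ∧
      xvec (fun m => exIntegMat (X m ω)) n 2 = ((-(n : ℝ) : ℝ) : EReal)) ∧
    (∀ i : Fin 3, ∀ U ∈ 𝓝 ((![0, 0, -1] : Fin 3 → EReal) i),
      Tendsto (fun n => μ {ω | mpScale n (xvec (fun m => exIntegMat (X m ω)) n i) ∉ U})
        atTop (𝓝 0)) ∧
    ∀ᵐ ω ∂μ, ∀ l : EReal,
      ¬ Tendsto (fun n => mpScale n (xvec (fun m => exIntegMat (X m ω)) n 0)) atTop (𝓝 l) := by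
  refine ⟨?_, fun i U hU => ?_, ?_⟩
  · filter_upwards [hnonneg] with ω hω n hn
    obtain ⟨n, rfl⟩ := Nat.exists_eq_add_of_le' hn
    simp [xvec_exIntegMat_succ hω n]
  · exact tendsto_measure_mpScale_xvec_exIntegMat_notMem (fun n => (hmeas n).aemeasurable)
      hnonneg htight i hU
  · exact ae_not_tendsto_mpScale_xvec_exIntegMat hmeas hindep hnonneg htight htail

end RandomOrbit

/-- **Example (the integrability condition is necessary).**
Let `(X_n)` be i.i.d. real random variables with `X_n ≥ 1` a.s. and `𝔼[X_n] = +∞`, and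
`A(n) = [[-X_n, -X_n, 0], [-∞, 0, 0], [-∞, -∞, -1]]`. Then for `n ≥ 1`,
`x(n,0) = (max(-X_{n-1}, -(n-1)), 0, -n)ᵀ`, and `(1/n) x(n,0)` converges to `(0,0,-1)ᵀ` in
probability but does not converge almost surely. -/
theorem integrability_example
    {Ω : Type*} [MeasurableSpace Ω] (μ : Measure Ω) [IsProbabilityMeasure μ]
    (X : ℕ → Ω → ℝ)
    (hmeas : ∀ n, Measurable (X n))
    (hindep : iIndepFun X μ)
    (hident : ∀ n, μ.map (X n) = μ.map (X 0))
    (hge : ∀ n, ∀ᵐ ω ∂μ, 1 ≤ X n ω)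
    (hinf : ∫⁻ ω, ENNReal.ofReal (X 0 ω) ∂μ = ⊤) :
    (∀ᵐ ω ∂μ, ∀ n : ℕ, 1 ≤ n →
      xvec (fun m => exIntegMat (X m ω)) n 0 =
        ((max (-(X (n - 1) ω)) (-((n : ℝ) - 1)) : ℝ) : EReal) ∧
      xvec (fun m => exIntegMat (X m ω)) n 1 = 0 ∧
      xvec (fun m => exIntegMat (X m ω)) n 2 = ((-(n : ℝ) : ℝ) : EReal)) ∧
    -- convergence in probability to (0, 0, -1):
    (∀ i : Fin 3, ∀ U ∈ 𝓝 ((![0, 0, -1] : Fin 3 → EReal) i),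
      Tendsto (fun n => μ {ω | mpScale n (xvec (fun m => exIntegMat (X m ω)) n i) ∉ U})
        atTop (𝓝 0)) ∧
    -- but not almost sure convergence:
    ¬ (∀ᵐ ω ∂μ, ∀ i : Fin 3, ∃ l : EReal,
      Tendsto (fun n => mpScale n (xvec (fun m => exIntegMat (X m ω)) n i)) atTop (𝓝 l)) := by
  have hnonneg : ∀ᵐ ω ∂μ, ∀ n, 0 ≤ X n ω :=
    ae_all_iff.2 fun n => (hge n).mono fun _ h => zero_le_one.trans h
  have htight : IsTightMeasureSet (Set.range fun n => μ.map (X n)) := by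
    simpa only [hident, Set.range_const] using isTightMeasureSet_singleton
  have htail : ∑' n : ℕ, μ {ω | (n : ℝ) < X n ω} = ⊤ :=
    tsum_measure_natCast_lt_eq_top
      (fun n => ⟨(hmeas n).aemeasurable, (hmeas 0).aemeasurable, hident n⟩) hinf
  obtain ⟨hform, hprob, hdiv⟩ :=
    integrability_example_general hmeas hindep hnonneg htight htail
  refine ⟨hform, hprob, fun hconv => ?_⟩
  obtain ⟨ω, hconvω, hdivω⟩ := (hconv.and hdiv).exists
  exact (hconvω 0).elim hdivω
end
end
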